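/- For n ≥ 5, the minimum number m such that every bridgeless graph of order n with at least m edges has an orientation of diameter at most n - 2 equals n + 3. That is: every bridgeless graph of order n with at least n + 3 edges has such an orientation, and there exists a bridgeless graph of order n with n + 2 edges that does not. -/

import Mathlib

open SimpleGraph

/-- `R` is an orientation of the simple graph `G`: every arc of `R` lies on an edge of `G`,
and every edge of `G` receives exactly one of its two possible directions. -/
def IsOrientation {V : Type*} (G : SimpleGraph V) (R : V → V → Prop) : Prop :=
  (∀ u v, R u v → G.Adj u v) ∧ ∀ u v, G.Adj u v → (R u v ↔ ¬ R v u)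

/-- `RelPow R k u v` : there is a directed walk of length `k` from `u` to `v`. -/
def RelPow {V : Type*} (R : V → V → Prop) : ℕ → V → V → Prop
  | 0, u, v => u = v
  | n + 1, u, v => ∃ w, R u w ∧ RelPow R n w v

/-- The digraph `R` has diameter at most `d`: any vertex can reach any other by a
directed walk of length at most `d`. -/
def DiamLE {V : Type*} (R : V → V → Prop) (d : ℕ) : Prop :=
  ∀ u v, ∃ k ≤ d, RelPow R k u v

/-- A digraph is strongly connected if every vertex can reach every other. -/
def StronglyConnected {V : Type*} (R : V → V → Prop) : Prop :=
  ∀ u v, Relation.ReflTransGen R u v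

/-- A graph is bridgeless if it is connected and contains no bridge. -/
def Bridgeless {V : Type*} (G : SimpleGraph V) : Prop :=
  G.Connected ∧ ∀ e, ¬ G.IsBridge e

/-- The graph `G_{n,d}`: the path `u_1 … u_d` is the set of indices `0,…,d-1`,
the clique `K_{n-d-1}` is the set of indices `d,…,n-2`, both endpoints `0` and `d-1`
of the path are joined to all clique vertices, and the extra vertex `u_3'` is the
index `n-1`, joined to `u_2, u_3, u_4`, i.e. to indices `1, 2, 3`. -/
def Gnd (n d : ℕ) : SimpleGraph (Fin n) :=
  SimpleGraph.fromRel (fun i j =>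
    ((i : ℕ) + 1 = (j : ℕ) ∧ (j : ℕ) < d) ∨
    (d ≤ (i : ℕ) ∧ (i : ℕ) < n - 1 ∧ d ≤ (j : ℕ) ∧ (j : ℕ) < n - 1) ∨
    (((i : ℕ) = 0 ∨ (i : ℕ) = d - 1) ∧ d ≤ (j : ℕ) ∧ (j : ℕ) < n - 1) ∨
    ((i : ℕ) = n - 1 ∧ ((j : ℕ) = 1 ∨ (j : ℕ) = 2 ∨ (j : ℕ) = 3)))

/-- The graph `H_{n,n-2}`: the cycle `u_1 … u_{n-1} u_1` is the set of indices
`0,…,n-2` in cyclic order, and the extra vertex `u_3'` is the index `n-1`,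
joined to `u_2, u_3, u_4`, i.e. to indices `1, 2, 3`. -/
def Hgraph (n : ℕ) : SimpleGraph (Fin n) :=
  SimpleGraph.fromRel (fun i j =>
    ((i : ℕ) + 1 = (j : ℕ) ∧ (j : ℕ) ≤ n - 2) ∨
    ((i : ℕ) = 0 ∧ (j : ℕ) = n - 2) ∨
    ((i : ℕ) = n - 1 ∧ ((j : ℕ) = 1 ∨ (j : ℕ) = 2 ∨ (j : ℕ) = 3)))

/-! ### Directed walks, numberings and strong orientations -/

theorem relPow_snoc {V : Type*} {R : V → V → Prop} (k : ℕ) (u v w : V)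
    (h : RelPow R k u v) (hvw : R v w) : RelPow R (k + 1) u w := by
  induction k generalizing u with
  | zero => cases h; exact ⟨w, hvw, rfl⟩
  | succ k ih =>
    obtain ⟨x, hx, hr⟩ := h
    exact ⟨x, hx, ih x hr⟩

theorem relPow_unsnoc {V : Type*} {R : V → V → Prop} (k : ℕ) (u w : V)
    (h : RelPow R (k + 1) u w) : ∃ v, RelPow R k u v ∧ R v w := by
  induction k generalizing u with
  | zero =>
    obtain ⟨x, hx, hr⟩ := h
    cases hr
    exact ⟨u, rfl, hx⟩
  | succ k ih =>
    obtain ⟨x, hx, hr⟩ := h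
    obtain ⟨v, hv, hvw⟩ := ih x hr
    exact ⟨v, ⟨x, hx, hv⟩, hvw⟩

theorem relPow_of_reach {V : Type*} {R : V → V → Prop} (u v : V)
    (h : Relation.ReflTransGen R u v) : ∃ k, RelPow R k u v := by
  induction h with
  | refl => exact ⟨0, rfl⟩
  | tail _ h2 ih =>
    obtain ⟨k, hk⟩ := ih
    exact ⟨k + 1, relPow_snoc k _ _ _ hk h2⟩

theorem relPow_potential {V : Type*} {R : V → V → Prop} (φ : V → ℤ)
    (hφ : ∀ x y, R x y → φ y ≤ φ x + 1) (k : ℕ) (u v : V) (h : RelPow R k u v) :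
    φ v ≤ φ u + k := by
  induction k generalizing u with
  | zero => cases h; simp
  | succ k ih =>
    obtain ⟨x, hx, hr⟩ := h
    have := ih x hr
    have := hφ _ _ hx
    push_cast
    linarith

/-- A strong digraph on `n` vertices of diameter more than `n - 2` has a numbering of its
vertices by `0, …, n - 1` along which arcs rise by at most one. -/
theorem exists_numbering {V : Type*} [Fintype V] {n : ℕ} (hn : 2 ≤ n)
    (hV : Fintype.card V = n) (R : V → V → Prop) (hR : StronglyConnected R)
    (hd : ¬ DiamLE R (n - 2)) :
    ∃ pos : V → ℕ, Function.Injective pos ∧ (∀ x, pos x < n) ∧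
      (∀ x y, R x y → pos y ≤ pos x + 1) ∧
      (∀ y k, pos y = k + 1 → ∃ x, R x y ∧ pos x = k) := by
  classical
  unfold DiamLE at hd
  push Not at hd
  obtain ⟨u, v, huv⟩ := hd
  have hex : ∀ x, ∃ k, RelPow R k u x := fun x => relPow_of_reach _ _ (hR u x)
  let pos : V → ℕ := fun x => Nat.find (hex x)
  have hpos : ∀ x, RelPow R (pos x) u x := fun x => Nat.find_spec (hex x)
  have hmin : ∀ x k, RelPow R k u x → pos x ≤ k := fun x k h => Nat.find_min' (hex x) h
  have hstep : ∀ x y, R x y → pos y ≤ pos x + 1 := fun x y h =>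
    hmin y _ (relPow_snoc _ _ _ _ (hpos x) h)
  have hpred : ∀ y k, pos y = k + 1 → ∃ x, R x y ∧ pos x = k := by
    intro y k hy
    have h1 := hpos y
    rw [hy] at h1
    obtain ⟨x, hx, hxy⟩ := relPow_unsnoc _ _ _ h1
    refine ⟨x, hxy, ?_⟩
    have h2 := hmin x k hx
    have h3 := hstep x y hxy
    omega
  have hv : n - 1 ≤ pos v := by
    by_contra hlt
    exact huv (pos v) (by omega) (hpos v)
  have hdown : ∀ d k, k + d = pos v → ∃ x, pos x = k := by
    intro d
    induction d with
    | zero => intro k hk; exact ⟨v, by omega⟩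
    | succ d ih =>
      intro k hk
      obtain ⟨y, hy⟩ := ih (k + 1) (by omega)
      obtain ⟨x, _, hx⟩ := hpred y k hy
      exact ⟨x, hx⟩
  have hsub : Finset.range (pos v + 1) ⊆ Finset.univ.image pos := by
    intro k hk
    have hk' := Finset.mem_range.mp hk
    obtain ⟨x, hx⟩ := hdown (pos v - k) k (by omega)
    exact Finset.mem_image.mpr ⟨x, Finset.mem_univ _, hx⟩
  have hc1 := Finset.card_le_card hsub
  have hc2 : (Finset.univ.image pos).card ≤ n := by
    rw [← hV]; exact Finset.card_image_le
  rw [Finset.card_range] at hc1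
  have hpv : pos v + 1 = n := by omega
  have himg : (Finset.univ.image pos).card = Fintype.card V := by omega
  have hinj : Function.Injective pos := by
    have := (Finset.card_image_iff (s := (Finset.univ : Finset V)) (f := pos)).mp
      (by rw [himg]; rfl)
    intro x y h
    exact this (by simp) (by simp) h
  have heq : Finset.range (pos v + 1) = Finset.univ.image pos :=
    Finset.eq_of_subset_of_card_le hsub (by rw [Finset.card_range]; omega)
  refine ⟨pos, hinj, ?_, hstep, hpred⟩
  intro x
  have : pos x ∈ Finset.range (pos v + 1) := by
    rw [heq]; exact Finset.mem_image_of_mem _ (Finset.mem_univ _)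
  have := Finset.mem_range.mp this
  omega

/-- One step of the mixed-graph version of Robbins' theorem. -/
theorem mixed_step {V : Type*} (G : SimpleGraph V) (hG : Bridgeless G)
    (M : V → V → Prop) (hcov : ∀ x y, G.Adj x y → M x y ∨ M y x)
    (hst : StronglyConnected M) (u v : V)
    (h1 : ¬ StronglyConnected (fun x y => M x y ∧ ¬ (x = v ∧ y = u)))
    (h2 : ¬ StronglyConnected (fun x y => M x y ∧ ¬ (x = u ∧ y = v))) : False := by
  set M0 : V → V → Prop := fun x y => M x y ∧ ¬ (x = v ∧ y = u) ∧ ¬ (x = u ∧ y = v) with hM0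
  have key : ∀ (a b : V) (N : V → V → Prop), (∀ x y, M x y → N x y ∨ (x = a ∧ y = b)) →
      Relation.ReflTransGen N a b → StronglyConnected N := by
    intro a b N hN hab x y
    induction hst x y with
    | refl => exact .refl
    | tail _ h ih =>
      rcases hN _ _ h with h | ⟨rfl, rfl⟩
      · exact ih.tail h
      · exact ih.trans hab
  have h1' : ¬ Relation.ReflTransGen M0 v u := by
    intro h
    apply h1
    apply key v u
    · intro x y hxy
      by_cases h : x = v ∧ y = u
      · exact Or.inr h
      · exact Or.inl ⟨hxy, h⟩
    · exact Relation.ReflTransGen.mono (fun x y hxy => ⟨hxy.1, hxy.2.1⟩) _ _ h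
  have h2' : ¬ Relation.ReflTransGen M0 u v := by
    intro h
    apply h2
    apply key u v
    · intro x y hxy
      by_cases h : x = u ∧ y = v
      · exact Or.inr h
      · exact Or.inl ⟨hxy, h⟩
    · exact Relation.ReflTransGen.mono (fun x y hxy => ⟨hxy.1, hxy.2.2⟩) _ _ h
  have hfrom : ∀ w, Relation.ReflTransGen M0 v w ∨ Relation.ReflTransGen M0 u w := by
    intro w
    induction hst v w with
    | refl => exact Or.inl .refl
    | @tail b c _ h ih =>
      by_cases ha : b = v ∧ c = u
      · rw [ha.2]; exact Or.inr .refl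
      by_cases hb : b = u ∧ c = v
      · rw [hb.2]; exact Or.inl .refl
      · exact ih.imp (fun k => k.tail ⟨h, ha, hb⟩) (fun k => k.tail ⟨h, ha, hb⟩)
  have hto : ∀ w, Relation.ReflTransGen M0 w v ∨ Relation.ReflTransGen M0 w u := by
    intro w
    induction hst w v using Relation.ReflTransGen.head_induction_on with
    | refl => exact Or.inl .refl
    | @head b c h _ ih =>
      by_cases ha : b = v ∧ c = u
      · rw [ha.1]; exact Or.inl .refl
      by_cases hb : b = u ∧ c = v
      · rw [hb.1]; exact Or.inr .refl
      · exact ih.imp (fun k => k.head ⟨h, ha, hb⟩) (fun k => k.head ⟨h, ha, hb⟩)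
  have hdisj : ∀ w, Relation.ReflTransGen M0 v w → Relation.ReflTransGen M0 u w → False := by
    intro w hv hu
    rcases hto w with h | h
    · exact h2' (hu.trans h)
    · exact h1' (hv.trans h)
  have hb := hG.2 s(u, v)
  rw [SimpleGraph.isBridge_iff, not_not, SimpleGraph.reachable_iff_reflTransGen] at hb
  apply h2'
  suffices H : ∀ w, Relation.ReflTransGen (G.deleteEdges {s(u, v)}).Adj u w →
      Relation.ReflTransGen M0 u w from H v hb
  intro w hw
  induction hw with
  | refl => exact .refl
  | @tail b c _ h ih =>
    rw [SimpleGraph.deleteEdges_adj] at h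
    have hne : ¬ (b = v ∧ c = u) ∧ ¬ (b = u ∧ c = v) := by
      constructor
      · rintro ⟨rfl, rfl⟩; exact h.2 (by simp [Sym2.eq_swap])
      · rintro ⟨rfl, rfl⟩; exact h.2 (by simp)
    rcases hcov _ _ h.1 with hm | hm
    · exact ih.tail ⟨hm, hne⟩
    · rcases hfrom c with hc | hc
      · exfalso
        exact hdisj b (hc.tail ⟨hm, fun k => hne.2 ⟨k.2, k.1⟩, fun k => hne.1 ⟨k.2, k.1⟩⟩) ih
      · exact hc

/-- Mixed-graph version of Robbins' theorem. -/
theorem mixed_robbins {V : Type*} [Finite V] (G : SimpleGraph V) (hG : Bridgeless G) (N : ℕ) :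
    ∀ (M : V → V → Prop), (∀ x y, M x y → G.Adj x y) → (∀ x y, G.Adj x y → M x y ∨ M y x) →
      StronglyConnected M → {p : V × V | M p.1 p.2}.ncard = N →
      ∃ R : V → V → Prop, IsOrientation G R ∧ StronglyConnected R ∧ ∀ x y, R x y → M x y := by
  induction N using Nat.strong_induction_on with
  | _ N ih =>
    intro M hsub hcov hst hN
    by_cases hboth : ∃ u v, M u v ∧ M v u
    · obtain ⟨u, v, huv, hvu⟩ := hboth
      have huv' : u ≠ v := (hsub _ _ huv).ne
      have main : ∀ a b : V, M a b → M b a → a ≠ b →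
          StronglyConnected (fun x y => M x y ∧ ¬ (x = a ∧ y = b)) →
          ∃ R : V → V → Prop, IsOrientation G R ∧ StronglyConnected R ∧ ∀ x y, R x y → M x y := by
        intro a b hab hba hne hs
        obtain ⟨R, h1, h2, h3⟩ := ih _ (by
          rw [← hN]
          apply Set.ncard_lt_ncard (t := {p : V × V | M p.1 p.2})
          · refine ⟨fun p hp => hp.1, fun hsup => ?_⟩
            exact (hsup (a := (a, b)) hab).2 ⟨rfl, rfl⟩) (fun x y => M x y ∧ ¬ (x = a ∧ y = b))
          (fun x y h => hsub x y h.1) (by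
            intro x y h
            by_cases hx : x = a ∧ y = b
            · right
              rw [hx.1, hx.2]
              exact ⟨hba, fun k => hne k.2⟩
            by_cases hy : y = a ∧ x = b
            · left
              rw [hy.1, hy.2]
              exact ⟨hba, fun k => hne k.2⟩
            · exact (hcov x y h).imp (fun k => ⟨k, hx⟩) (fun k => ⟨k, hy⟩)) hs rfl
        exact ⟨R, h1, h2, fun x y h => (h3 x y h).1⟩
      by_cases h1 : StronglyConnected (fun x y => M x y ∧ ¬ (x = v ∧ y = u))
      · exact main v u hvu huv huv'.symm h1
      by_cases h2 : StronglyConnected (fun x y => M x y ∧ ¬ (x = u ∧ y = v))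
      · exact main u v huv hvu huv' h2
      · exact (mixed_step G hG M hcov hst u v h1 h2).elim
    · push Not at hboth
      refine ⟨M, ⟨hsub, ?_⟩, hst, fun _ _ h => h⟩
      intro u v h
      exact ⟨fun k => hboth u v k, fun k => (hcov u v h).resolve_right k⟩

/-- A partial orientation certifying that every strong completion has small diameter. -/
structure Cert {V : Type*} (G : SimpleGraph V) (D : V → V → Prop) : Prop where
  sub : ∀ x y, D x y → G.Adj x y
  anti : ∀ x y, D x y → ¬ D y x
  rev : ∀ x y, D x y → Relation.ReflTransGen D y x
  nopos : ∀ pos : V → ℕ, Function.Injective pos → (∀ x y, D x y → pos y ≤ pos x + 1) → False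

theorem strong_completion {V : Type*} [Finite V] (G : SimpleGraph V) (hG : Bridgeless G)
    (D : V → V → Prop) (sub : ∀ x y, D x y → G.Adj x y) (anti : ∀ x y, D x y → ¬ D y x)
    (rev : ∀ x y, D x y → Relation.ReflTransGen D y x) :
    ∃ R : V → V → Prop, IsOrientation G R ∧ StronglyConnected R ∧ ∀ x y, D x y → R x y := by
  have hDM : ∀ x y, D x y → G.Adj x y ∧ ¬ D y x := fun x y h => ⟨sub x y h, anti x y h⟩
  obtain ⟨R, h1, h2, h3⟩ := mixed_robbins G hG _ (fun x y => G.Adj x y ∧ ¬ D y x)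
    (fun x y h => h.1) (by
      intro x y h
      by_cases hd : D y x
      · exact Or.inr ⟨h.symm, anti _ _ hd⟩
      · exact Or.inl ⟨h, hd⟩) (by
      intro x y
      have hr := hG.1.preconnected x y
      rw [SimpleGraph.reachable_iff_reflTransGen] at hr
      induction hr with
      | refl => exact .refl
      | @tail b c _ h ih =>
        by_cases hd : D c b
        · exact ih.trans (Relation.ReflTransGen.mono hDM _ _ (rev _ _ hd))
        · exact ih.tail ⟨h, hd⟩) rfl
  refine ⟨R, h1, h2, fun x y h => ?_⟩
  rw [h1.2 x y (sub x y h)]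
  intro k
  exact (h3 _ _ k).2 h

theorem Cert.good {V : Type*} [Fintype V] {n : ℕ} (hn : 2 ≤ n) (hV : Fintype.card V = n)
    (G : SimpleGraph V) (hG : Bridgeless G) (D : V → V → Prop) (hD : Cert G D) :
    ∃ R : V → V → Prop, IsOrientation G R ∧ DiamLE R (n - 2) := by
  obtain ⟨R, h1, h2, h3⟩ := strong_completion G hG D hD.sub hD.anti hD.rev
  refine ⟨R, h1, ?_⟩
  by_contra hd
  obtain ⟨pos, hp, _, hs, _⟩ := exists_numbering hn hV R h2 hd
  exact hD.nopos pos hp (fun x y h => hs x y (h3 x y h))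

/-- A graph without a good orientation is a Hamiltonian path together with chords which
cover every edge of the path. -/
theorem exists_path {V : Type} [Fintype V] {n : ℕ} (hn : 2 ≤ n) (hV : Fintype.card V = n)
    (G : SimpleGraph V) (hG : Bridgeless G)
    (hbad : ¬ ∃ R : V → V → Prop, IsOrientation G R ∧ DiamLE R (n - 2)) :
    ∃ f : ℕ → V, (∀ i j, i < n → j < n → f i = f j → i = j) ∧ (∀ x, ∃ i < n, f i = x) ∧
      (∀ i, i + 1 < n → G.Adj (f i) (f (i + 1))) ∧
      (∀ k, k + 1 < n → ∃ i j, i ≤ k ∧ k < j ∧ j < n ∧ i + 2 ≤ j ∧ G.Adj (f i) (f j)) := by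
  classical
  obtain ⟨R, h1, h2, -⟩ := strong_completion G hG (fun _ _ => False)
    (fun _ _ h => h.elim) (fun _ _ h => h.elim) (fun _ _ h => h.elim)
  have hd : ¬ DiamLE R (n - 2) := fun hd => hbad ⟨R, h1, hd⟩
  obtain ⟨pos, hinj, hlt, hs, hp⟩ := exists_numbering hn hV R h2 hd
  have hsurj : ∀ i < n, ∃ x, pos x = i := by
    have : Finset.univ.image pos = Finset.range n := by
      apply Finset.eq_of_subset_of_card_le
      · intro i hi
        obtain ⟨x, _, rfl⟩ := Finset.mem_image.mp hi
        exact Finset.mem_range.mpr (hlt x)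
      · rw [Finset.card_range, Finset.card_image_of_injective _ hinj, ← hV]; rfl
    intro i hi
    have : i ∈ Finset.univ.image pos := by rw [this]; exact Finset.mem_range.mpr hi
    obtain ⟨x, _, hx⟩ := Finset.mem_image.mp this
    exact ⟨x, hx⟩
  have : Nonempty V := hG.1.nonempty
  choose g hg using hsurj
  let f : ℕ → V := fun i => if h : i < n then g i h else Classical.arbitrary V
  have hf : ∀ i, i < n → pos (f i) = i := by
    intro i hi
    simp only [f, dif_pos hi]
    exact hg i hi
  have hf' : ∀ x, f (pos x) = x := fun x => hinj (hf _ (hlt x))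
  have harc : ∀ i, i + 1 < n → R (f i) (f (i + 1)) := by
    intro i hi
    obtain ⟨x, hx, hxi⟩ := hp (f (i + 1)) i (hf _ hi)
    rw [← hf' x, hxi] at hx
    exact hx
  refine ⟨f, ?_, fun x => ⟨pos x, hlt x, hf' x⟩, fun i hi => h1.1 _ _ (harc i hi), ?_⟩
  · intro i j hi hj h
    rw [← hf i hi, ← hf j hj, h]
  · intro k hk
    by_contra hno
    push Not at hno
    have : ∀ w, Relation.ReflTransGen R (f (k + 1)) w → k < pos w := by
      intro w hw
      induction hw with
      | refl => rw [hf _ hk]; omega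
      | @tail b c _ h ih =>
        by_contra hc
        push Not at hc
        by_cases hgap : pos c + 2 ≤ pos b
        · apply hno (pos c) (pos b) hc ih (hlt b) hgap
          rw [hf', hf']
          exact (h1.1 _ _ h).symm
        · have hb : pos b = pos c + 1 := by omega
          have := harc (pos c) (by have := hlt b; omega)
          rw [← hb, hf', hf'] at this
          exact ((h1.2 _ _ (h1.1 _ _ h)).mp h) this
    have h3 := this (f k) (h2 _ _)
    rw [hf k (by omega)] at h3
    omega

/-! ### Obstructions to numberings -/

/-- Reachability by a walk which never enters `z`. -/
abbrev RA {V : Type*} (D : V → V → Prop) (z : V) : V → V → Prop :=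
  Relation.ReflTransGen (fun a b => D a b ∧ b ≠ z)

theorem RA.forget {V : Type*} {D : V → V → Prop} {z x y : V} (h : RA D z x y) :
    Relation.ReflTransGen D x y :=
  Relation.ReflTransGen.mono (fun _ _ h => h.1) _ _ h

/-- A walk along the sequence `X` from index `l` up to index `r`. -/
def Up {V : Type*} (X : ℕ → V) (l r : ℕ) (x y : V) : Prop :=
  ∃ i, l ≤ i ∧ i < r ∧ x = X i ∧ y = X (i + 1)

theorem reach_up {V : Type*} {D : V → V → Prop} {X : ℕ → V} {l r : ℕ} (hlr : l ≤ r)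
    (h : ∀ i, l ≤ i → i < r → D (X i) (X (i + 1))) :
    Relation.ReflTransGen D (X l) (X r) := by
  induction r, hlr using Nat.le_induction with
  | base => exact .refl
  | succ r hr ih =>
    exact (ih (fun i h1 h2 => h i h1 (by omega))).tail (h r hr (by omega))

theorem reach_dn {V : Type*} {D : V → V → Prop} {X : ℕ → V} {l r : ℕ} (hlr : l ≤ r)
    (h : ∀ i, l ≤ i → i < r → D (X (i + 1)) (X i)) :
    Relation.ReflTransGen D (X r) (X l) := by
  induction r, hlr using Nat.le_induction with
  | base => exact .refl
  | succ r hr ih =>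
    exact (ih (fun i h1 h2 => h i h1 (by omega))).head (h r hr (by omega))

theorem ra_up {V : Type*} {D : V → V → Prop} {X : ℕ → V} {l r : ℕ} {z : V} (hlr : l ≤ r)
    (h : ∀ i, l ≤ i → i < r → D (X i) (X (i + 1)))
    (hz : ∀ i, l < i → i ≤ r → X i ≠ z) : RA D z (X l) (X r) :=
  reach_up hlr (fun i h1 h2 => ⟨h i h1 h2, hz _ (by omega) (by omega)⟩)

theorem ra_dn {V : Type*} {D : V → V → Prop} {X : ℕ → V} {l r : ℕ} {z : V} (hlr : l ≤ r)
    (h : ∀ i, l ≤ i → i < r → D (X (i + 1)) (X i))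
    (hz : ∀ i, l ≤ i → i < r → X i ≠ z) : RA D z (X r) (X l) :=
  reach_dn hlr (fun i h1 h2 => ⟨h i h1 h2, hz _ (by omega) (by omega)⟩)

theorem rev_up {V : Type*} {D : V → V → Prop} {X : ℕ → V} {l r : ℕ}
    (h : ∀ i, l ≤ i → i < r → D (X i) (X (i + 1)))
    (hr : Relation.ReflTransGen D (X r) (X l)) (i : ℕ) (h1 : l ≤ i) (h2 : i < r) :
    Relation.ReflTransGen D (X (i + 1)) (X i) :=
  (reach_up (by omega) (fun j h3 h4 => h j (by omega) (by omega))).trans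
    (hr.trans (reach_up h1 (fun j h3 h4 => h j (by omega) (by omega))))

theorem rev_dn {V : Type*} {D : V → V → Prop} {X : ℕ → V} {l r : ℕ}
    (h : ∀ i, l ≤ i → i < r → D (X (i + 1)) (X i))
    (hr : Relation.ReflTransGen D (X l) (X r)) (i : ℕ) (h1 : l ≤ i) (h2 : i < r) :
    Relation.ReflTransGen D (X i) (X (i + 1)) :=
  (reach_dn h1 (fun j h3 h4 => h j (by omega) (by omega))).trans
    (hr.trans (reach_dn (by omega) (fun j h3 h4 => h j (by omega) (by omega))))

section Numbering

variable {V : Type*} {D : V → V → Prop} {pos : V → ℕ}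

theorem pos_barrier (hi : Function.Injective pos) (hs : ∀ x y, D x y → pos y ≤ pos x + 1)
    {x y z : V} (h : RA D z x y) (hx : pos x < pos z) : pos y < pos z := by
  induction h with
  | refl => exact hx
  | @tail b c _ h ih =>
    have h1 := hs _ _ h.1
    have h2 : pos c ≠ pos z := fun k => h.2 (hi k)
    omega

theorem pos_branch (hi : Function.Injective pos) (hs : ∀ x y, D x y → pos y ≤ pos x + 1)
    (hD : ∀ x y, D x y → x ≠ y) {a x y : V} (hx : D a x) (hy : D a y) (hxy : x ≠ y) :
    pos x < pos a ∨ pos y < pos a := by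
  have h1 := hs _ _ hx
  have h2 := hs _ _ hy
  have h3 : pos x ≠ pos y := fun k => hxy (hi k)
  have h4 : pos a ≠ pos x := fun k => hD _ _ hx (hi k)
  have h5 : pos a ≠ pos y := fun k => hD _ _ hy (hi k)
  omega

theorem pos_lower (hi : Function.Injective pos) (hs : ∀ x y, D x y → pos y ≤ pos x + 1)
    (hD : ∀ x y, D x y → x ≠ y) {a x y c : V} (hx : D a x) (hy : D a y) (hxy : x ≠ y)
    (hxc : RA D a x c) (hyc : RA D a y c) : pos c < pos a := by
  rcases pos_branch hi hs hD hx hy hxy with h | h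
  · exact pos_barrier hi hs hxc h
  · exact pos_barrier hi hs hyc h

theorem pos_in_lower (hi : Function.Injective pos) (hs : ∀ x y, D x y → pos y ≤ pos x + 1)
    (hD : ∀ x y, D x y → x ≠ y) {b x y v : V} (hx : D x b) (hy : D y b) (hxy : x ≠ y)
    (hvb : v ≠ b) (hvx : RA D b v x) (hvy : RA D b v y) : pos b < pos v := by
  have h1 := hs _ _ hx
  have h2 := hs _ _ hy
  have h3 : pos x ≠ pos y := fun k => hxy (hi k)
  have h4 : pos x ≠ pos b := fun k => hD _ _ hx (hi k)
  have h5 : pos y ≠ pos b := fun k => hD _ _ hy (hi k)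
  have h6 : pos v ≠ pos b := fun k => hvb (hi k)
  by_contra hlt
  have h7 := pos_barrier hi hs hvx (by omega)
  have h8 := pos_barrier hi hs hvy (by omega)
  omega

theorem pos_two_below (hi : Function.Injective pos) (hs : ∀ x y, D x y → pos y ≤ pos x + 1)
    {y z v : V} (hy : pos y < pos v) (hz : pos z < pos v) (hyz : y ≠ z)
    (h1 : RA D z y v) (h2 : RA D y z v) : False := by
  have h3 : pos y ≠ pos z := fun k => hyz (hi k)
  rcases Nat.lt_or_gt_of_ne h3 with h | h
  · have := pos_barrier hi hs h1 h
    omega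
  · have := pos_barrier hi hs h2 h
    omega

theorem nopos_mutual (hi : Function.Injective pos) (hs : ∀ x y, D x y → pos y ≤ pos x + 1)
    (hD : ∀ x y, D x y → x ≠ y) {a x x' c y y' : V}
    (hx : D a x) (hx' : D a x') (hxx : x ≠ x') (h1 : RA D a x c) (h2 : RA D a x' c)
    (hy : D c y) (hy' : D c y') (hyy : y ≠ y') (h3 : RA D c y a) (h4 : RA D c y' a) : False := by
  have := pos_lower hi hs hD hx hx' hxx h1 h2
  have := pos_lower hi hs hD hy hy' hyy h3 h4
  omega

/-- A cycle through `z` hanging at an inner vertex `v` of a theta with two given poles. -/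
theorem nopos_hang (hi : Function.Injective pos) (hs : ∀ x y, D x y → pos y ≤ pos x + 1)
    (hD : ∀ x y, D x y → x ≠ y) {v z c x y c' x' y' : V}
    (hx : D c x) (hy : D c y) (hxy : x ≠ y) (hxv : RA D c x v) (hyv : RA D c y v)
    (hx' : D x' c') (hy' : D y' c') (hxy' : x' ≠ y') (hvc : v ≠ c')
    (hvx : RA D c' v x') (hvy : RA D c' v y')
    (hvz : D v z) (hzc : z ≠ c') (h1 : RA D c' z v) (h2 : RA D z c' v) (h3 : RA D z v c) :
    False := by
  have g1 := pos_lower hi hs hD hx hy hxy hxv hyv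
  have g2 := pos_in_lower hi hs hD hx' hy' hxy' hvc hvx hvy
  have g3 := hs _ _ hvz
  have g4 : pos v ≠ pos z := fun k => hD _ _ hvz (hi k)
  rcases Nat.lt_or_gt_of_ne g4 with h | h
  · have := pos_barrier hi hs h3 h
    omega
  · exact pos_two_below hi hs h g2 hzc h1 h2

/-- A cycle through `z` hanging at a pole `v` of a theta with poles `v`, `t`. -/
theorem nopos_pole (hi : Function.Injective pos) (hs : ∀ x y, D x y → pos y ≤ pos x + 1)
    (hD : ∀ x y, D x y → x ≠ y) {v z x y t : V}
    (hz : D v z) (hx : D v x) (hy : D v y) (hxy : x ≠ y) (hzx : z ≠ x) (hzy : z ≠ y)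
    (hzt : z ≠ t) (hxt : RA D v x t) (hyt : RA D v y t)
    (h1 : RA D t z v) (h2 : RA D z t v) (h3 : RA D y x v) (h4 : RA D x y v) : False := by
  have g1 := pos_lower hi hs hD hx hy hxy hxt hyt
  by_cases h : pos z < pos v
  · exact pos_two_below hi hs h g1 hzt h1 h2
  · have g2 := (pos_branch hi hs hD hz hx hzx).resolve_left h
    have g3 := (pos_branch hi hs hD hz hy hzy).resolve_left h
    exact pos_two_below hi hs g2 g3 hxy h3 h4

theorem pos_chain (hi : Function.Injective pos) (hs : ∀ x y, D x y → pos y ≤ pos x + 1)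
    (hD : ∀ x y, D x y → x ≠ y) {a b z y w : V}
    (haz : D a z) (hab : D a b) (hby : D b y) (hbw : D b w) (hzb : z ≠ b) (hyw : y ≠ w)
    (hyz : y ≠ z) (hya : y ≠ a) (hwa : w ≠ a)
    (h1 : RA D z y a) (h2 : RA D y z a) (h3 : RA D a w b) : pos b < pos a := by
  by_contra hlt
  have g0 := (pos_branch hi hs hD haz hab hzb).resolve_right hlt
  have g1 := hs _ _ hab
  have g2 : pos a ≠ pos b := fun k => hD _ _ hab (hi k)
  have g3 : pos y ≠ pos a := fun k => hya (hi k)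
  have g4 : pos w ≠ pos a := fun k => hwa (hi k)
  by_cases h : pos y < pos a
  · exact pos_two_below hi hs h g0 hyz h1 h2
  · have g5 : pos b ≠ pos y := fun k => hD _ _ hby (hi k)
    have g6 := (pos_branch hi hs hD hby hbw hyw).resolve_left (by omega)
    have := pos_barrier hi hs h3 (by omega)
    omega

end Numbering

/-- Three internally disjoint paths `X`, `Y`, `Z` with common ends. -/
structure Theta {V : Type*} (G : SimpleGraph V) (X Y Z : ℕ → V) (a b c : ℕ) : Prop where
  ha : 1 ≤ a
  hb : 1 ≤ b
  hc : 1 ≤ c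
  hab : 3 ≤ a + b
  hac : 3 ≤ a + c
  hbc : 3 ≤ b + c
  xy0 : X 0 = Y 0
  xz0 : X 0 = Z 0
  xy1 : X a = Y b
  xz1 : X a = Z c
  adjX : ∀ i < a, G.Adj (X i) (X (i + 1))
  adjY : ∀ i < b, G.Adj (Y i) (Y (i + 1))
  adjZ : ∀ i < c, G.Adj (Z i) (Z (i + 1))
  injX : ∀ i j, i ≤ a → j ≤ a → X i = X j → i = j
  injY : ∀ i j, i ≤ b → j ≤ b → Y i = Y j → i = j
  injZ : ∀ i j, i ≤ c → j ≤ c → Z i = Z j → i = j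
  injXY : ∀ i j, i ≤ a → j ≤ b → X i = Y j → (i = 0 ∧ j = 0) ∨ (i = a ∧ j = b)
  injXZ : ∀ i j, i ≤ a → j ≤ c → X i = Z j → (i = 0 ∧ j = 0) ∨ (i = a ∧ j = c)
  injYZ : ∀ i j, i ≤ b → j ≤ c → Y i = Z j → (i = 0 ∧ j = 0) ∨ (i = b ∧ j = c)

/-- A chord inside one path of a theta. -/
theorem Theta.cert_same {V : Type*} {G : SimpleGraph V} {X Y Z : ℕ → V} {a b c : ℕ}
    (h : Theta G X Y Z a b c) {p q : ℕ} (hpq : p + 2 ≤ q) (hq : q ≤ a)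
    (he : G.Adj (X p) (X q)) (hnb : ¬ (p = 0 ∧ q = a ∧ b = 1))
    (hnc : ¬ (p = 0 ∧ q = a ∧ c = 1)) : ∃ D, Cert G D := by
  obtain ⟨ha, hb, hc, hab, hac, hbc, xy0, xz0, xy1, xz1, adjX, adjY, adjZ, injX, injY, injZ,
    injXY, injXZ, injYZ⟩ := h
  obtain ⟨b, rfl⟩ : ∃ b', b = b' + 1 := ⟨b - 1, by omega⟩
  obtain ⟨c, rfl⟩ : ∃ c', c = c' + 1 := ⟨c - 1, by omega⟩
  set D : V → V → Prop := fun x y =>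
    Up X 0 a x y ∨
    Up Y 0 (b + 1) y x ∨
    Up Z 0 (c + 1) y x ∨
    (x = X p ∧ y = X q) with hDdef
  have dX : ∀ i, 0 ≤ i → i < a → D (X i) (X (i + 1)) := fun i h0 h =>
    Or.inl ⟨i, h0, h, rfl, rfl⟩
  have dY : ∀ i, 0 ≤ i → i < (b + 1) → D (Y (i + 1)) (Y i) := fun i h0 h =>
    Or.inr (Or.inl ⟨i, h0, h, rfl, rfl⟩)
  have dZ : ∀ i, 0 ≤ i → i < (c + 1) → D (Z (i + 1)) (Z i) := fun i h0 h =>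
    Or.inr (Or.inr (Or.inl ⟨i, h0, h, rfl, rfl⟩))
  have dE : D (X p) (X q) := Or.inr (Or.inr (Or.inr ⟨rfl, rfl⟩))
  have sub : ∀ x y, D x y → G.Adj x y := by
    rintro x y
      (⟨i, h1, h2, rfl, rfl⟩ |
      ⟨i, h1, h2, rfl, rfl⟩ |
      ⟨i, h1, h2, rfl, rfl⟩ |
      ⟨rfl, rfl⟩)
    · exact adjX i (by omega)
    · exact (adjY i (by omega)).symm
    · exact (adjZ i (by omega)).symm
    · exact he
  have anti : ∀ x y, D x y → ¬ D y x := by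
    clear_value D
    subst hDdef
    rintro x y
      (⟨i, h1, h2, rfl, rfl⟩ |
      ⟨i, h1, h2, rfl, rfl⟩ |
      ⟨i, h1, h2, rfl, rfl⟩ |
      ⟨rfl, rfl⟩)
      (⟨j, h3, h4, h5, h6⟩ |
      ⟨j, h3, h4, h5, h6⟩ |
      ⟨j, h3, h4, h5, h6⟩ |
      ⟨h5, h6⟩) <;>
    clear adjX adjY adjZ dX dY dZ dE sub <;> grind
  clear_value D
  have hne : ∀ x y, D x y → x ≠ y := fun x y h => (sub x y h).ne
  have rA : Relation.ReflTransGen D (X 0) (X a) := reach_up (by omega) dX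
  have rB : Relation.ReflTransGen D (X a) (X 0) := by
    rw [xy0, xy1]; exact reach_dn (by omega) dY
  have rev : ∀ x y, D x y → Relation.ReflTransGen D y x := by
    rw [hDdef]
    rintro x y
      (⟨i, h1, h2, rfl, rfl⟩ |
      ⟨i, h1, h2, rfl, rfl⟩ |
      ⟨i, h1, h2, rfl, rfl⟩ |
      ⟨rfl, rfl⟩) <;>
    rw [← hDdef]
    · exact rev_up dX rB i h1 h2
    · exact rev_dn dY (xy0 ▸ xy1 ▸ rA) i h1 h2
    · exact rev_dn dZ (xz0 ▸ xz1 ▸ rA) i h1 h2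
    · exact ((reach_up (by omega) (fun i h1 h2 => dX i (by omega) (by omega))).trans
        (rB.trans (reach_up (by omega) (fun i h1 h2 => dX i (by omega) (by omega)))))
  refine ⟨D, sub, anti, rev, fun pos hi hs => ?_⟩
  have e1 : RA D (X p) (X (p + 1)) (X a) :=
    ra_up (by omega) (fun i h1 h2 => dX i (by omega) h2) (by
      clear * - hpq hq hnb hnc ha hb hc hab hac hbc xy0 xz0 xy1 xz1 injX injY injZ injXY injXZ injYZ
      grind)
  have e2 : RA D (X p) (X q) (X a) :=
    ra_up (by omega) (fun i h1 h2 => dX i (by omega) h2) (by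
      clear * - hpq hq hnb hnc ha hb hc hab hac hbc xy0 xz0 xy1 xz1 injX injY injZ injXY injXZ injYZ
      grind)
  have e0 : RA D (X a) (X 0) (X p) :=
    ra_up (by omega) (fun i h1 h2 => dX i (by omega) (by omega)) (by
      clear * - hpq hq hnb hnc ha hb hc hab hac hbc xy0 xz0 xy1 xz1 injX injY injZ injXY injXZ injYZ
      grind)
  have e3 : RA D (X a) (Y b) (Y 0) :=
    ra_dn (by omega) (fun i h1 h2 => dY i (by omega) (by omega)) (by
      clear * - hpq hq hnb hnc ha hb hc hab hac hbc xy0 xz0 xy1 xz1 injX injY injZ injXY injXZ injYZ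
      grind)
  have e4 : RA D (X a) (Z c) (Z 0) :=
    ra_dn (by omega) (fun i h1 h2 => dZ i (by omega) (by omega)) (by
      clear * - hpq hq hnb hnc ha hb hc hab hac hbc xy0 xz0 xy1 xz1 injX injY injZ injXY injXZ injYZ
      grind)
  rw [← xy0] at e3
  rw [← xz0] at e4
  refine nopos_mutual hi hs hne (dX p (by omega) (by omega)) dE (by
      clear * - hpq hq hnb hnc ha hb hc hab hac hbc xy0 xz0 xy1 xz1 injX injY injZ injXY injXZ injYZ
      grind) e1 e2
    (y := Y b) (y' := Z c) ?_ ?_ (by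
      clear * - hpq hq hnb hnc ha hb hc hab hac hbc xy0 xz0 xy1 xz1 injX injY injZ injXY injXZ injYZ
      grind) (e3.trans e0) (e4.trans e0)
  · rw [xy1]; exact dY b (by omega) (by omega)
  · rw [xz1]; exact dZ c (by omega) (by omega)

/-- Two non-crossing chords between two paths of a theta. -/
theorem Theta.cert_par {V : Type*} {G : SimpleGraph V} {X Y Z : ℕ → V} {a b c : ℕ}
    (h : Theta G X Y Z a b c) {p q p' q' : ℕ} (hp : 1 ≤ p) (hpp : p ≤ p') (hp' : p' < a)
    (hq : 1 ≤ q) (hqq : q ≤ q') (hq' : q' < b) (hne' : ¬ (p = p' ∧ q = q'))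
    (he : G.Adj (X p) (Y q)) (hf : G.Adj (X p') (Y q')) : ∃ D, Cert G D := by
  obtain ⟨ha, hb, hc, hab, hac, hbc, xy0, xz0, xy1, xz1, adjX, adjY, adjZ, injX, injY, injZ,
    injXY, injXZ, injYZ⟩ := h
  obtain ⟨b, rfl⟩ : ∃ b', b = b' + 1 := ⟨b - 1, by omega⟩
  obtain ⟨q, rfl⟩ : ∃ b', q = b' + 1 := ⟨q - 1, by omega⟩
  clear xz0 xz1 adjZ injZ injXZ injYZ
  set D : V → V → Prop := fun x y =>
    Up X 0 a x y ∨
    Up Y 0 (b + 1) y x ∨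
    (x = Y (q + 1) ∧ y = X p) ∨
    (x = X p' ∧ y = Y q') with hDdef
  have dX : ∀ i, 0 ≤ i → i < a → D (X i) (X (i + 1)) := fun i h0 h =>
    Or.inl ⟨i, h0, h, rfl, rfl⟩
  have dY : ∀ i, 0 ≤ i → i < (b + 1) → D (Y (i + 1)) (Y i) := fun i h0 h =>
    Or.inr (Or.inl ⟨i, h0, h, rfl, rfl⟩)
  have dE : D (Y (q + 1)) (X p) := Or.inr (Or.inr (Or.inl ⟨rfl, rfl⟩))
  have dF : D (X p') (Y q') := Or.inr (Or.inr (Or.inr ⟨rfl, rfl⟩))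
  have sub : ∀ x y, D x y → G.Adj x y := by
    rintro x y
      (⟨i, h1, h2, rfl, rfl⟩ |
      ⟨i, h1, h2, rfl, rfl⟩ |
      ⟨rfl, rfl⟩ |
      ⟨rfl, rfl⟩)
    · exact adjX i (by omega)
    · exact (adjY i (by omega)).symm
    · exact he.symm
    · exact hf
  have anti : ∀ x y, D x y → ¬ D y x := by
    clear_value D
    subst hDdef
    rintro x y
      (⟨i, h1, h2, rfl, rfl⟩ |
      ⟨i, h1, h2, rfl, rfl⟩ |
      ⟨rfl, rfl⟩ |
      ⟨rfl, rfl⟩)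
      (⟨j, h3, h4, h5, h6⟩ |
      ⟨j, h3, h4, h5, h6⟩ |
      ⟨h5, h6⟩ |
      ⟨h5, h6⟩) <;>
    clear adjX adjY dX dY dE dF sub <;> grind
  clear_value D
  have hne : ∀ x y, D x y → x ≠ y := fun x y h => (sub x y h).ne
  have rA : Relation.ReflTransGen D (X 0) (X a) := reach_up (by omega) dX
  have rB : Relation.ReflTransGen D (X a) (X 0) := by
    rw [xy0, xy1]; exact reach_dn (by omega) dY
  have rC : Relation.ReflTransGen D (X a) (Y (b + 1)) := by rw [xy1]
  have rD : Relation.ReflTransGen D (Y 0) (X 0) := by rw [xy0]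
  have rev : ∀ x y, D x y → Relation.ReflTransGen D y x := by
    rw [hDdef]
    rintro x y
      (⟨i, h1, h2, rfl, rfl⟩ |
      ⟨i, h1, h2, rfl, rfl⟩ |
      ⟨rfl, rfl⟩ |
      ⟨rfl, rfl⟩) <;>
    rw [← hDdef]
    · exact rev_up dX rB i h1 h2
    · exact rev_dn dY (xy0 ▸ xy1 ▸ rA) i h1 h2
    · exact ((reach_up (by omega) (fun i h1 h2 => dX i (by omega) (by omega))).trans
        (rC.trans (reach_dn (by omega) (fun i h1 h2 => dY i (by omega) (by omega)))))
    · exact ((reach_dn (by omega) (fun i h1 h2 => dY i (by omega) (by omega))).trans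
        (rD.trans (reach_up (by omega) (fun i h1 h2 => dX i (by omega) (by omega)))))
  refine ⟨D, sub, anti, rev, fun pos hi hs => ?_⟩
  have e1 : RA D (Y (q + 1)) (Y q) (Y 0) :=
    ra_dn (by omega) (fun i h1 h2 => dY i (by omega) (by omega)) (by
      clear * - hp hpp hp' hq hqq hq' hne' ha hb hab xy0 xy1 injX injY injXY
      grind)
  rw [← xy0] at e1
  have e2 : RA D (Y (q + 1)) (X 0) (X p') :=
    ra_up (by omega) (fun i h1 h2 => dX i (by omega) (by omega)) (by
      clear * - hp hpp hp' hq hqq hq' hne' ha hb hab xy0 xy1 injX injY injXY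
      grind)
  have e3 : RA D (Y (q + 1)) (X p) (X p') :=
    ra_up (by omega) (fun i h1 h2 => dX i (by omega) (by omega)) (by
      clear * - hp hpp hp' hq hqq hq' hne' ha hb hab xy0 xy1 injX injY injXY
      grind)
  have e4 : RA D (X p') (X (p' + 1)) (X a) :=
    ra_up (by omega) (fun i h1 h2 => dX i (by omega) (by omega)) (by
      clear * - hp hpp hp' hq hqq hq' hne' ha hb hab xy0 xy1 injX injY injXY
      grind)
  rw [xy1] at e4
  have e5 : RA D (X p') (Y (b + 1)) (Y (q + 1)) :=
    ra_dn (by omega) (fun i h1 h2 => dY i (by omega) (by omega)) (by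
      clear * - hp hpp hp' hq hqq hq' hne' ha hb hab xy0 xy1 injX injY injXY
      grind)
  have e6 : RA D (X p') (Y q') (Y (q + 1)) :=
    ra_dn (by omega) (fun i h1 h2 => dY i (by omega) (by omega)) (by
      clear * - hp hpp hp' hq hqq hq' hne' ha hb hab xy0 xy1 injX injY injXY
      grind)
  exact nopos_mutual hi hs hne (dY q (by omega) (by omega)) dE (by
      clear * - hp hpp hp' hq hqq hq' hne' ha hb hab xy0 xy1 injX injY injXY
      grind) (e1.trans e2) e3
    (dX p' (by omega) (by omega)) dF (by
      clear * - hp hpp hp' hq hqq hq' hne' ha hb hab xy0 xy1 injX injY injXY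
      grind) (e4.trans e5) e6

/-- Two crossing chords between two paths of a theta. -/
theorem Theta.cert_cross {V : Type*} {G : SimpleGraph V} {X Y Z : ℕ → V} {a b c : ℕ}
    (h : Theta G X Y Z a b c) {p q p' q' : ℕ} (hp : 1 ≤ p) (hpp : p < p') (hp' : p' < a)
    (hq' : 1 ≤ q') (hqq : q' < q) (hq : q < b)
    (he : G.Adj (X p) (Y q)) (hf : G.Adj (X p') (Y q')) : ∃ D, Cert G D := by
  obtain ⟨ha, hb, hc, hab, hac, hbc, xy0, xz0, xy1, xz1, adjX, adjY, adjZ, injX, injY, injZ,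
    injXY, injXZ, injYZ⟩ := h
  set D : V → V → Prop := fun x y =>
    Up X 0 a x y ∨
    Up Y 0 b y x ∨
    Up Z 0 c x y ∨
    (x = Y q ∧ y = X p) ∨
    (x = X p' ∧ y = Y q') with hDdef
  have dX : ∀ i, 0 ≤ i → i < a → D (X i) (X (i + 1)) := fun i h0 h =>
    Or.inl ⟨i, h0, h, rfl, rfl⟩
  have dY : ∀ i, 0 ≤ i → i < b → D (Y (i + 1)) (Y i) := fun i h0 h =>
    Or.inr (Or.inl ⟨i, h0, h, rfl, rfl⟩)
  have dZ : ∀ i, 0 ≤ i → i < c → D (Z i) (Z (i + 1)) := fun i h0 h =>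
    Or.inr (Or.inr (Or.inl ⟨i, h0, h, rfl, rfl⟩))
  have dE : D (Y q) (X p) := Or.inr (Or.inr (Or.inr (Or.inl ⟨rfl, rfl⟩)))
  have dF : D (X p') (Y q') := Or.inr (Or.inr (Or.inr (Or.inr ⟨rfl, rfl⟩)))
  have sub : ∀ x y, D x y → G.Adj x y := by
    rintro x y
      (⟨i, h1, h2, rfl, rfl⟩ |
      ⟨i, h1, h2, rfl, rfl⟩ |
      ⟨i, h1, h2, rfl, rfl⟩ |
      ⟨rfl, rfl⟩ |
      ⟨rfl, rfl⟩)
    · exact adjX i (by omega)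
    · exact (adjY i (by omega)).symm
    · exact adjZ i (by omega)
    · exact he.symm
    · exact hf
  have anti : ∀ x y, D x y → ¬ D y x := by
    clear_value D
    subst hDdef
    rintro x y
      (⟨i, h1, h2, rfl, rfl⟩ |
      ⟨i, h1, h2, rfl, rfl⟩ |
      ⟨i, h1, h2, rfl, rfl⟩ |
      ⟨rfl, rfl⟩ |
      ⟨rfl, rfl⟩)
      (⟨j, h3, h4, h5, h6⟩ |
      ⟨j, h3, h4, h5, h6⟩ |
      ⟨j, h3, h4, h5, h6⟩ |
      ⟨h5, h6⟩ |
      ⟨h5, h6⟩) <;>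
    clear adjX adjY adjZ dX dY dZ dE dF sub <;> grind
  clear_value D
  have hne : ∀ x y, D x y → x ≠ y := fun x y h => (sub x y h).ne
  have rA : Relation.ReflTransGen D (X 0) (X a) := reach_up (by omega) dX
  have rB : Relation.ReflTransGen D (X a) (X 0) := by
    rw [xy0, xy1]; exact reach_dn (by omega) dY
  have rC : Relation.ReflTransGen D (X a) (Y b) := by rw [xy1]
  have rD : Relation.ReflTransGen D (Y 0) (X 0) := by rw [xy0]
  have rev : ∀ x y, D x y → Relation.ReflTransGen D y x := by
    rw [hDdef]
    rintro x y
      (⟨i, h1, h2, rfl, rfl⟩ |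
      ⟨i, h1, h2, rfl, rfl⟩ |
      ⟨i, h1, h2, rfl, rfl⟩ |
      ⟨rfl, rfl⟩ |
      ⟨rfl, rfl⟩) <;>
    rw [← hDdef]
    · exact rev_up dX rB i h1 h2
    · exact rev_dn dY (xy0 ▸ xy1 ▸ rA) i h1 h2
    · exact rev_up dZ (xz0 ▸ xz1 ▸ rB) i h1 h2
    · exact ((reach_up (by omega) (fun i h1 h2 => dX i (by omega) (by omega))).trans
        (rC.trans (reach_dn (by omega) (fun i h1 h2 => dY i (by omega) (by omega)))))
    · exact ((reach_dn (by omega) (fun i h1 h2 => dY i (by omega) (by omega))).trans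
        (rD.trans (reach_up (by omega) (fun i h1 h2 => dX i (by omega) (by omega)))))
  refine ⟨D, sub, anti, rev, fun pos hi hs => ?_⟩
  have e1 : RA D (X 0) (X (0 + 1)) (X p') :=
    ra_up (by omega) (fun i h1 h2 => dX i (by omega) (by omega)) (by
      clear * - hp hpp hp' hq' hqq hq ha hb hc hab hac hbc xy0 xz0 xy1 xz1 injX injY injZ injXY injXZ injYZ
      grind)
  have e2 : RA D (X 0) (Z (0 + 1)) (Z c) :=
    ra_up (by omega) (fun i h1 h2 => dZ i (by omega) (by omega)) (by
      clear * - hp hpp hp' hq' hqq hq ha hb hc hab hac hbc xy0 xz0 xy1 xz1 injX injY injZ injXY injXZ injYZ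
      grind)
  rw [← xz1, xy1] at e2
  have e3 : RA D (X 0) (Y b) (Y q) :=
    ra_dn (by omega) (fun i h1 h2 => dY i (by omega) (by omega)) (by
      clear * - hp hpp hp' hq' hqq hq ha hb hc hab hac hbc xy0 xz0 xy1 xz1 injX injY injZ injXY injXZ injYZ
      grind)
  have e4 : RA D (X 0) (X p) (X p') :=
    ra_up (by omega) (fun i h1 h2 => dX i (by omega) (by omega)) (by
      clear * - hp hpp hp' hq' hqq hq ha hb hc hab hac hbc xy0 xz0 xy1 xz1 injX injY injZ injXY injXZ injYZ
      grind)
  have e5 : RA D (X p') (X (p' + 1)) (X a) :=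
    ra_up (by omega) (fun i h1 h2 => dX i (by omega) (by omega)) (by
      clear * - hp hpp hp' hq' hqq hq ha hb hc hab hac hbc xy0 xz0 xy1 xz1 injX injY injZ injXY injXZ injYZ
      grind)
  rw [xy1] at e5
  have e6 : RA D (X p') (Y b) (Y 0) :=
    ra_dn (by omega) (fun i h1 h2 => dY i (by omega) (by omega)) (by
      clear * - hp hpp hp' hq' hqq hq ha hb hc hab hac hbc xy0 xz0 xy1 xz1 injX injY injZ injXY injXZ injYZ
      grind)
  have e7 : RA D (X p') (Y q') (Y 0) :=
    ra_dn (by omega) (fun i h1 h2 => dY i (by omega) (by omega)) (by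
      clear * - hp hpp hp' hq' hqq hq ha hb hc hab hac hbc xy0 xz0 xy1 xz1 injX injY injZ injXY injXZ injYZ
      grind)
  rw [← xy0] at e6 e7
  have e8 : RA D (X 0) (Y q) (X p') := e4.head ⟨dE, by
      clear * - hp hpp hp' hq' hqq hq ha hb hc hab hac hbc xy0 xz0 xy1 xz1 injX injY injZ injXY injXZ injYZ
      grind⟩
  have d0 := dZ 0 (by omega) (by omega)
  rw [← xz0] at d0
  exact nopos_mutual hi hs hne (dX 0 (by omega) (by omega)) d0 (by
      clear * - hp hpp hp' hq' hqq hq ha hb hc hab hac hbc xy0 xz0 xy1 xz1 injX injY injZ injXY injXZ injYZ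
      grind) e1
    (e2.trans (e3.trans e8)) (dX p' (by omega) (by omega)) dF (by
      clear * - hp hpp hp' hq' hqq hq ha hb hc hab hac hbc xy0 xz0 xy1 xz1 injX injY injZ injXY injXZ injYZ
      grind) (e5.trans e6) e7

/-- Two chords of a theta leaving one path towards the two others, spread case. -/
theorem Theta.cert_spread {V : Type*} {G : SimpleGraph V} {X Y Z : ℕ → V} {a b c : ℕ}
    (h : Theta G X Y Z a b c) {p q p' q' : ℕ} (hp : 1 ≤ p) (hpp : p < p') (hp' : p' < a)
    (hq : 1 ≤ q) (hqb : q < b) (hq' : 1 ≤ q') (hqc : q' < c)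
    (he : G.Adj (X p) (Y q)) (hf : G.Adj (X p') (Z q')) : ∃ D, Cert G D := by
  obtain ⟨ha, hb, hc, hab, hac, hbc, xy0, xz0, xy1, xz1, adjX, adjY, adjZ, injX, injY, injZ,
    injXY, injXZ, injYZ⟩ := h
  obtain ⟨a, rfl⟩ : ∃ b', a = b' + 1 := ⟨a - 1, by omega⟩
  obtain ⟨c, rfl⟩ : ∃ b', c = b' + 1 := ⟨c - 1, by omega⟩
  set D : V → V → Prop := fun x y =>
    Up Y 0 b x y ∨
    Up Z 0 (c + 1) y x ∨
    Up X 0 p x y ∨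
    Up X p' (a + 1) y x ∨
    (x = X p ∧ y = Y q) ∨
    (x = X p' ∧ y = Z q') with hDdef
  have dY : ∀ i, 0 ≤ i → i < b → D (Y i) (Y (i + 1)) := fun i h0 h =>
    Or.inl ⟨i, h0, h, rfl, rfl⟩
  have dZ : ∀ i, 0 ≤ i → i < (c + 1) → D (Z (i + 1)) (Z i) := fun i h0 h =>
    Or.inr (Or.inl ⟨i, h0, h, rfl, rfl⟩)
  have dX : ∀ i, 0 ≤ i → i < p → D (X i) (X (i + 1)) := fun i h0 h =>
    Or.inr (Or.inr (Or.inl ⟨i, h0, h, rfl, rfl⟩))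
  have dX' : ∀ i, p' ≤ i → i < (a + 1) → D (X (i + 1)) (X i) := fun i h0 h =>
    Or.inr (Or.inr (Or.inr (Or.inl ⟨i, h0, h, rfl, rfl⟩)))
  have dE : D (X p) (Y q) := Or.inr (Or.inr (Or.inr (Or.inr (Or.inl ⟨rfl, rfl⟩))))
  have dF : D (X p') (Z q') := Or.inr (Or.inr (Or.inr (Or.inr (Or.inr ⟨rfl, rfl⟩))))
  have sub : ∀ x y, D x y → G.Adj x y := by
    rintro x y
      (⟨i, h1, h2, rfl, rfl⟩ |
      ⟨i, h1, h2, rfl, rfl⟩ |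
      ⟨i, h1, h2, rfl, rfl⟩ |
      ⟨i, h1, h2, rfl, rfl⟩ |
      ⟨rfl, rfl⟩ |
      ⟨rfl, rfl⟩)
    · exact adjY i (by omega)
    · exact (adjZ i (by omega)).symm
    · exact adjX i (by omega)
    · exact (adjX i (by omega)).symm
    · exact he
    · exact hf
  have anti : ∀ x y, D x y → ¬ D y x := by
    clear_value D
    subst hDdef
    rintro x y
      (⟨i, h1, h2, rfl, rfl⟩ |
      ⟨i, h1, h2, rfl, rfl⟩ |
      ⟨i, h1, h2, rfl, rfl⟩ |
      ⟨i, h1, h2, rfl, rfl⟩ |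
      ⟨rfl, rfl⟩ |
      ⟨rfl, rfl⟩)
      (⟨j, h3, h4, h5, h6⟩ |
      ⟨j, h3, h4, h5, h6⟩ |
      ⟨j, h3, h4, h5, h6⟩ |
      ⟨j, h3, h4, h5, h6⟩ |
      ⟨h5, h6⟩ |
      ⟨h5, h6⟩) <;>
    clear adjX adjY adjZ dY dZ dX dX' dE dF sub <;> grind
  clear_value D
  have hne : ∀ x y, D x y → x ≠ y := fun x y h => (sub x y h).ne
  have rA : Relation.ReflTransGen D (X 0) (X (a + 1)) := by
    rw [xy0, xy1]; exact reach_up (by omega) dY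
  have rB : Relation.ReflTransGen D (X (a + 1)) (X 0) := by
    rw [xz0, xz1]; exact reach_dn (by omega) dZ
  have rC : Relation.ReflTransGen D (X p) (Y q) := .single dE
  have rE : Relation.ReflTransGen D (X p') (Z q') := .single dF
  have rF : Relation.ReflTransGen D (Y q) (X (a + 1)) := by
    rw [xy1]; exact reach_up (by omega) (fun i h1 h2 => dY i (by omega) (by omega))
  have rD : Relation.ReflTransGen D (Z q') (X 0) := by
    rw [xz0]; exact reach_dn (by omega) (fun i h1 h2 => dZ i (by omega) (by omega))
  have rev : ∀ x y, D x y → Relation.ReflTransGen D y x := by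
    rw [hDdef]
    rintro x y
      (⟨i, h1, h2, rfl, rfl⟩ |
      ⟨i, h1, h2, rfl, rfl⟩ |
      ⟨i, h1, h2, rfl, rfl⟩ |
      ⟨i, h1, h2, rfl, rfl⟩ |
      ⟨rfl, rfl⟩ |
      ⟨rfl, rfl⟩) <;>
    rw [← hDdef]
    · exact rev_up dY (xy1 ▸ xy0 ▸ rB) i h1 h2
    · exact rev_dn dZ (xz0 ▸ xz1 ▸ rA) i h1 h2
    · exact rev_up dX (rC.trans (rF.trans rB)) i h1 h2
    · exact rev_dn dX' (rE.trans (rD.trans rA)) i h1 h2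
    · exact (rF.trans (rB.trans (reach_up (by omega) dX)))
    · exact (rD.trans (rA.trans (reach_dn (by omega) dX')))
  refine ⟨D, sub, anti, rev, fun pos hi hs => ?_⟩
  have e1 : RA D (X 0) (X (0 + 1)) (X p) :=
    ra_up (by omega) (fun i h1 h2 => dX i (by omega) (by omega)) (by
      clear * - hp hpp hp' hq hqb hq' hqc ha hb hc hab hac hbc xy0 xz0 xy1 xz1 injX injY injZ injXY injXZ injYZ
      grind)
  have e2 : RA D (X 0) (Y q) (Y b) :=
    ra_up (by omega) (fun i h1 h2 => dY i (by omega) (by omega)) (by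
      clear * - hp hpp hp' hq hqb hq' hqc ha hb hc hab hac hbc xy0 xz0 xy1 xz1 injX injY injZ injXY injXZ injYZ
      grind)
  have e3 : RA D (X 0) (Y (0 + 1)) (Y b) :=
    ra_up (by omega) (fun i h1 h2 => dY i (by omega) (by omega)) (by
      clear * - hp hpp hp' hq hqb hq' hqc ha hb hc hab hac hbc xy0 xz0 xy1 xz1 injX injY injZ injXY injXZ injYZ
      grind)
  rw [← xy1] at e2 e3
  have e4 : RA D (X (a + 1)) (X a) (X p') :=
    ra_dn (by omega) (fun i h1 h2 => dX' i (by omega) (by omega)) (by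
      clear * - hp hpp hp' hq hqb hq' hqc ha hb hc hab hac hbc xy0 xz0 xy1 xz1 injX injY injZ injXY injXZ injYZ
      grind)
  have e5 : RA D (X (a + 1)) (Z q') (Z 0) :=
    ra_dn (by omega) (fun i h1 h2 => dZ i (by omega) (by omega)) (by
      clear * - hp hpp hp' hq hqb hq' hqc ha hb hc hab hac hbc xy0 xz0 xy1 xz1 injX injY injZ injXY injXZ injYZ
      grind)
  have e6 : RA D (X (a + 1)) (Z c) (Z 0) :=
    ra_dn (by omega) (fun i h1 h2 => dZ i (by omega) (by omega)) (by
      clear * - hp hpp hp' hq hqb hq' hqc ha hb hc hab hac hbc xy0 xz0 xy1 xz1 injX injY injZ injXY injXZ injYZ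
      grind)
  rw [← xz0] at e5 e6
  have e7 : RA D (X 0) (X p) (X (a + 1)) := e2.head ⟨dE, by
      clear * - hp hpp hp' hq hqb hq' hqc ha hb hc hab hac hbc xy0 xz0 xy1 xz1 injX injY injZ injXY injXZ injYZ
      grind⟩
  have e8 : RA D (X (a + 1)) (X p') (X 0) := e5.head ⟨dF, by
      clear * - hp hpp hp' hq hqb hq' hqc ha hb hc hab hac hbc xy0 xz0 xy1 xz1 injX injY injZ injXY injXZ injYZ
      grind⟩
  have d0 := dY 0 (by omega) (by omega)
  rw [← xy0] at d0
  have d1 := dZ c (by omega) (by omega)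
  rw [← xz1] at d1
  exact nopos_mutual hi hs hne (dX 0 (by omega) (by omega)) d0 (by
      clear * - hp hpp hp' hq hqb hq' hqc ha hb hc hab hac hbc xy0 xz0 xy1 xz1 injX injY injZ injXY injXZ injYZ
      grind) (e1.trans e7) e3
    (dX' a (by omega) (by omega)) d1 (by
      clear * - hp hpp hp' hq hqb hq' hqc ha hb hc hab hac hbc xy0 xz0 xy1 xz1 injX injY injZ injXY injXZ injYZ
      grind) (e4.trans e8) e6

/-- Two chords of a theta leaving one path towards the two others, hub case. -/
theorem Theta.cert_hub {V : Type*} {G : SimpleGraph V} {X Y Z : ℕ → V} {a b c : ℕ}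
    (h : Theta G X Y Z a b c) {p q q' : ℕ} (hp : 1 ≤ p) (hp' : p < a)
    (hq : 1 ≤ q) (hqb : q < b) (hq' : 1 ≤ q') (hqc : q' < c)
    (he : G.Adj (X p) (Y q)) (hf : G.Adj (X p) (Z q')) : ∃ D, Cert G D := by
  obtain ⟨ha, hb, hc, hab, hac, hbc, xy0, xz0, xy1, xz1, adjX, adjY, adjZ, injX, injY, injZ,
    injXY, injXZ, injYZ⟩ := h
  obtain ⟨q', rfl⟩ : ∃ b', q' = b' + 1 := ⟨q' - 1, by omega⟩
  set D : V → V → Prop := fun x y =>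
    Up Y q b x y ∨
    Up Z 0 c y x ∨
    Up X 0 a x y ∨
    (x = X p ∧ y = Y q) ∨
    (x = Z (q' + 1) ∧ y = X p) with hDdef
  have dY : ∀ i, q ≤ i → i < b → D (Y i) (Y (i + 1)) := fun i h0 h =>
    Or.inl ⟨i, h0, h, rfl, rfl⟩
  have dZ : ∀ i, 0 ≤ i → i < c → D (Z (i + 1)) (Z i) := fun i h0 h =>
    Or.inr (Or.inl ⟨i, h0, h, rfl, rfl⟩)
  have dX : ∀ i, 0 ≤ i → i < a → D (X i) (X (i + 1)) := fun i h0 h =>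
    Or.inr (Or.inr (Or.inl ⟨i, h0, h, rfl, rfl⟩))
  have dE : D (X p) (Y q) := Or.inr (Or.inr (Or.inr (Or.inl ⟨rfl, rfl⟩)))
  have dF : D (Z (q' + 1)) (X p) := Or.inr (Or.inr (Or.inr (Or.inr ⟨rfl, rfl⟩)))
  have sub : ∀ x y, D x y → G.Adj x y := by
    rintro x y
      (⟨i, h1, h2, rfl, rfl⟩ |
      ⟨i, h1, h2, rfl, rfl⟩ |
      ⟨i, h1, h2, rfl, rfl⟩ |
      ⟨rfl, rfl⟩ |
      ⟨rfl, rfl⟩)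
    · exact adjY i (by omega)
    · exact (adjZ i (by omega)).symm
    · exact adjX i (by omega)
    · exact he
    · exact hf.symm
  have anti : ∀ x y, D x y → ¬ D y x := by
    clear_value D
    subst hDdef
    rintro x y
      (⟨i, h1, h2, rfl, rfl⟩ |
      ⟨i, h1, h2, rfl, rfl⟩ |
      ⟨i, h1, h2, rfl, rfl⟩ |
      ⟨rfl, rfl⟩ |
      ⟨rfl, rfl⟩)
      (⟨j, h3, h4, h5, h6⟩ |
      ⟨j, h3, h4, h5, h6⟩ |
      ⟨j, h3, h4, h5, h6⟩ |
      ⟨h5, h6⟩ |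
      ⟨h5, h6⟩) <;>
    clear adjX adjY adjZ dY dZ dX dE dF sub <;> grind
  clear_value D
  have hne : ∀ x y, D x y → x ≠ y := fun x y h => (sub x y h).ne
  have rA : Relation.ReflTransGen D (X 0) (X a) := reach_up (by omega) dX
  have rB : Relation.ReflTransGen D (X a) (X 0) := by
    rw [xz0, xz1]; exact reach_dn (by omega) dZ
  have rC : Relation.ReflTransGen D (X 0) (X p) :=
    reach_up (by omega) (fun i h1 h2 => dX i (by omega) (by omega))
  have rD : Relation.ReflTransGen D (X p) (X a) :=
    reach_up (by omega) (fun i h1 h2 => dX i (by omega) (by omega))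
  have rE : Relation.ReflTransGen D (X p) (Y q) := .single dE
  have rF : Relation.ReflTransGen D (Y q) (X a) := by
    rw [xy1]; exact reach_up (by omega) dY
  have rG : Relation.ReflTransGen D (X a) (Z (q' + 1)) := by
    rw [xz1]; exact reach_dn (by omega) (fun i h1 h2 => dZ i (by omega) (by omega))
  have rev : ∀ x y, D x y → Relation.ReflTransGen D y x := by
    rw [hDdef]
    rintro x y
      (⟨i, h1, h2, rfl, rfl⟩ |
      ⟨i, h1, h2, rfl, rfl⟩ |
      ⟨i, h1, h2, rfl, rfl⟩ |
      ⟨rfl, rfl⟩ |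
      ⟨rfl, rfl⟩) <;>
    rw [← hDdef]
    · exact rev_up dY (xy1 ▸ rB.trans (rC.trans rE)) i h1 h2
    · exact rev_dn dZ (xz0 ▸ xz1 ▸ rA) i h1 h2
    · exact rev_up dX rB i h1 h2
    · exact (rF.trans (rB.trans rC))
    · exact (rD.trans rG)
  refine ⟨D, sub, anti, rev, fun pos hi hs => ?_⟩
  have e1 : RA D (X p) (Y q) (Y b) :=
    ra_up (by omega) (fun i h1 h2 => dY i (by omega) (by omega)) (by
      clear * - hp hp' hq hqb hq' hqc ha hb hc hab hac hbc xy0 xz0 xy1 xz1 injX injY injZ injXY injXZ injYZ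
      grind)
  have e2 : RA D (X p) (X (p + 1)) (X a) :=
    ra_up (by omega) (fun i h1 h2 => dX i (by omega) (by omega)) (by
      clear * - hp hp' hq hqb hq' hqc ha hb hc hab hac hbc xy0 xz0 xy1 xz1 injX injY injZ injXY injXZ injYZ
      grind)
  have e3 : RA D (X p) (Z c) (Z (q' + 1)) :=
    ra_dn (by omega) (fun i h1 h2 => dZ i (by omega) (by omega)) (by
      clear * - hp hp' hq hqb hq' hqc ha hb hc hab hac hbc xy0 xz0 xy1 xz1 injX injY injZ injXY injXZ injYZ
      grind)
  rw [← xy1] at e1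
  rw [← xz1] at e3
  have e4 : RA D (Z (q' + 1)) (Z q') (Z 0) :=
    ra_dn (by omega) (fun i h1 h2 => dZ i (by omega) (by omega)) (by
      clear * - hp hp' hq hqb hq' hqc ha hb hc hab hac hbc xy0 xz0 xy1 xz1 injX injY injZ injXY injXZ injYZ
      grind)
  have e5 : RA D (Z (q' + 1)) (X 0) (X p) :=
    ra_up (by omega) (fun i h1 h2 => dX i (by omega) (by omega)) (by
      clear * - hp hp' hq hqb hq' hqc ha hb hc hab hac hbc xy0 xz0 xy1 xz1 injX injY injZ injXY injXZ injYZ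
      grind)
  rw [← xz0] at e4
  exact nopos_mutual hi hs hne dE (dX p (by omega) (by omega)) (by
      clear * - hp hp' hq hqb hq' hqc ha hb hc hab hac hbc xy0 xz0 xy1 xz1 injX injY injZ injXY injXZ injYZ
      grind) (e1.trans e3)
    (e2.trans e3) (dZ q' (by omega) (by omega)) dF (by
      clear * - hp hp' hq hqb hq' hqc ha hb hc hab hac hbc xy0 xz0 xy1 xz1 injX injY injZ injXY injXZ injYZ
      grind) (e4.trans e5) .refl

theorem Theta.swap12 {V : Type*} {G : SimpleGraph V} {X Y Z : ℕ → V} {a b c : ℕ}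
    (h : Theta G X Y Z a b c) : Theta G Y X Z b a c := by
  obtain ⟨ha, hb, hc, hab, hac, hbc, xy0, xz0, xy1, xz1, adjX, adjY, adjZ, injX, injY, injZ,
    injXY, injXZ, injYZ⟩ := h
  refine ⟨hb, ha, hc, by omega, hbc, hac, xy0.symm, xy0 ▸ xz0, xy1.symm, xy1 ▸ xz1,
    adjY, adjX, adjZ, injY, injX, injZ, ?_, injYZ, injXZ⟩
  intro i j hi hj hij
  rcases injXY j i hj hi hij.symm with h | h
  · exact Or.inl ⟨h.2, h.1⟩
  · exact Or.inr ⟨h.2, h.1⟩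

theorem Theta.swap23 {V : Type*} {G : SimpleGraph V} {X Y Z : ℕ → V} {a b c : ℕ}
    (h : Theta G X Y Z a b c) : Theta G X Z Y a c b := by
  obtain ⟨ha, hb, hc, hab, hac, hbc, xy0, xz0, xy1, xz1, adjX, adjY, adjZ, injX, injY, injZ,
    injXY, injXZ, injYZ⟩ := h
  refine ⟨ha, hc, hb, hac, hab, by omega, xz0, xy0, xz1, xy1,
    adjX, adjZ, adjY, injX, injZ, injY, injXZ, injXY, ?_⟩
  intro i j hi hj hij
  rcases injYZ j i hj hi hij.symm with h | h
  · exact Or.inl ⟨h.2, h.1⟩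
  · exact Or.inr ⟨h.2, h.1⟩

/-- The pair `x`, `y` is not an edge of the path `X` of length `a`. -/
def OffPath {V : Type*} (X : ℕ → V) (a : ℕ) (x y : V) : Prop :=
  ∀ i < a, ¬ (x = X i ∧ y = X (i + 1)) ∧ ¬ (y = X i ∧ x = X (i + 1))

theorem OffPath.symm {V : Type*} {X : ℕ → V} {a : ℕ} {x y : V} (h : OffPath X a x y) :
    OffPath X a y x := fun i hi => (h i hi).symm

theorem Theta.inside {V : Type*} {G : SimpleGraph V} {X Y Z : ℕ → V} {a b c : ℕ}
    (h : Theta G X Y Z a b c) {i j : ℕ} (hi : i ≤ a) (hj : j ≤ a) (he : G.Adj (X i) (X j))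
    (hX : OffPath X a (X i) (X j)) (hY : OffPath Y b (X i) (X j))
    (hZ : OffPath Z c (X i) (X j)) : ∃ D, Cert G D := by
  rcases Nat.lt_trichotomy i j with hij | hij | hij
  · refine h.cert_same (p := i) (q := j) ?_ hj he ?_ ?_
    · by_contra hlt
      obtain rfl : j = i + 1 := by omega
      exact (hX i (by omega)).1 ⟨rfl, rfl⟩
    · rintro ⟨rfl, rfl, rfl⟩
      exact (hY 0 (by omega)).1 ⟨h.xy0, h.xy1⟩
    · rintro ⟨rfl, rfl, rfl⟩
      exact (hZ 0 (by omega)).1 ⟨h.xz0, h.xz1⟩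
  · subst hij
    exact absurd rfl he.ne
  · refine h.cert_same (p := j) (q := i) ?_ hi he.symm ?_ ?_
    · by_contra hlt
      obtain rfl : i = j + 1 := by omega
      exact (hX j (by omega)).2 ⟨rfl, rfl⟩
    · rintro ⟨rfl, rfl, rfl⟩
      exact (hY 0 (by omega)).2 ⟨h.xy0, h.xy1⟩
    · rintro ⟨rfl, rfl, rfl⟩
      exact (hZ 0 (by omega)).2 ⟨h.xz0, h.xz1⟩

/-- The pair `x`, `y` joins interior vertices of the paths `X` and `Y`. -/
def Cr {V : Type*} (X Y : ℕ → V) (a b : ℕ) (x y : V) : Prop :=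
  ∃ p q, 1 ≤ p ∧ p < a ∧ 1 ≤ q ∧ q < b ∧ ((x = X p ∧ y = Y q) ∨ (y = X p ∧ x = Y q))

theorem Cr.symm {V : Type*} {X Y : ℕ → V} {a b : ℕ} {x y : V} (h : Cr X Y a b x y) :
    Cr X Y a b y x := by
  obtain ⟨p, q, h1, h2, h3, h4, h5⟩ := h
  exact ⟨p, q, h1, h2, h3, h4, h5.symm⟩

theorem Cr.flip {V : Type*} {X Y : ℕ → V} {a b : ℕ} {x y : V} (h : Cr X Y a b x y) :
    Cr Y X b a x y := by
  obtain ⟨p, q, h1, h2, h3, h4, h5⟩ := h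
  refine ⟨q, p, h3, h4, h1, h2, ?_⟩
  tauto

theorem Theta.mixed {V : Type*} {G : SimpleGraph V} {X Y Z : ℕ → V} {a b c : ℕ}
    (h : Theta G X Y Z a b c) {i j : ℕ} (hi : i ≤ a) (hj : j ≤ b) (he : G.Adj (X i) (Y j))
    (hX : OffPath X a (X i) (Y j)) (hY : OffPath Y b (X i) (Y j))
    (hZ : OffPath Z c (X i) (Y j)) : (∃ D, Cert G D) ∨ Cr X Y a b (X i) (Y j) := by
  by_cases h1 : i = 0
  · subst h1
    rw [h.xy0] at *
    exact Or.inl (h.swap12.inside (Nat.zero_le _) hj he hY hX hZ)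
  by_cases h2 : i = a
  · subst h2
    rw [h.xy1] at *
    exact Or.inl (h.swap12.inside le_rfl hj he hY hX hZ)
  by_cases h3 : j = 0
  · subst h3
    rw [← h.xy0] at *
    exact Or.inl (h.inside hi (Nat.zero_le _) he hX hY hZ)
  by_cases h4 : j = b
  · subst h4
    rw [← h.xy1] at *
    exact Or.inl (h.inside hi le_rfl he hX hY hZ)
  exact Or.inr ⟨i, j, by omega, by omega, by omega, by omega, Or.inl ⟨rfl, rfl⟩⟩

theorem Theta.classify {V : Type*} {G : SimpleGraph V} {X Y Z : ℕ → V} {a b c : ℕ}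
    (h : Theta G X Y Z a b c)
    (hcov : ∀ v, (∃ i ≤ a, v = X i) ∨ (∃ i ≤ b, v = Y i) ∨ (∃ i ≤ c, v = Z i)) {x y : V}
    (he : G.Adj x y) (hX : OffPath X a x y) (hY : OffPath Y b x y)
    (hZ : OffPath Z c x y) :
    (∃ D, Cert G D) ∨ Cr X Y a b x y ∨ Cr X Z a c x y ∨ Cr Y Z b c x y := by
  rcases hcov x with ⟨i, hi, rfl⟩ | ⟨i, hi, rfl⟩ | ⟨i, hi, rfl⟩ <;>
  rcases hcov y with ⟨j, hj, rfl⟩ | ⟨j, hj, rfl⟩ | ⟨j, hj, rfl⟩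
  · exact Or.inl (h.inside hi hj he hX hY hZ)
  · rcases h.mixed hi hj he hX hY hZ with h | h <;> tauto
  · rcases h.swap23.mixed hi hj he hX hZ hY with h | h <;> tauto
  · rcases h.mixed hj hi he.symm hX.symm hY.symm hZ.symm with h | h
    · tauto
    · have := h.symm; tauto
  · exact Or.inl (h.swap12.inside hi hj he hY hX hZ)
  · rcases h.swap12.swap23.mixed hi hj he hY hZ hX with h | h <;> tauto
  · rcases h.swap23.mixed hj hi he.symm hX.symm hZ.symm hY.symm with h | h
    · tauto
    · have := h.symm; tauto
  · rcases h.swap12.swap23.mixed hj hi he.symm hY.symm hZ.symm hX.symm with h | h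
    · tauto
    · have := h.symm; tauto
  · exact Or.inl (h.swap23.swap12.inside hi hj he hZ hX hY)

theorem Theta.two_same {V : Type*} {G : SimpleGraph V} {X Y Z : ℕ → V} {a b c : ℕ}
    (h : Theta G X Y Z a b c) {x y x' y' : V} (he : G.Adj x y) (he' : G.Adj x' y')
    (hne : s(x, y) ≠ s(x', y')) (h1 : Cr X Y a b x y) (h2 : Cr X Y a b x' y') :
    ∃ D, Cert G D := by
  obtain ⟨p, q, hp, hpa, hq, hqb, h5⟩ := h1
  obtain ⟨p', q', hp', hpa', hq', hqb', h6⟩ := h2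
  have e1 : G.Adj (X p) (Y q) := by
    rcases h5 with ⟨rfl, rfl⟩ | ⟨rfl, rfl⟩
    · exact he
    · exact he.symm
  have e2 : G.Adj (X p') (Y q') := by
    rcases h6 with ⟨rfl, rfl⟩ | ⟨rfl, rfl⟩
    · exact he'
    · exact he'.symm
  have hn : ¬ (p = p' ∧ q = q') := by
    rintro ⟨rfl, rfl⟩
    apply hne
    rcases h5 with ⟨rfl, rfl⟩ | ⟨rfl, rfl⟩ <;> rcases h6 with ⟨rfl, rfl⟩ | ⟨rfl, rfl⟩ <;>
      simp [Sym2.eq_swap]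
  clear hne h5 h6 he he'
  rcases Nat.lt_trichotomy p p' with hpp | hpp | hpp
  · rcases Nat.lt_or_ge q' q with hqq | hqq
    · exact h.cert_cross hp hpp hpa' hq' hqq hqb e1 e2
    · exact h.cert_par hp hpp.le hpa' hq hqq hqb' hn e1 e2
  · rcases Nat.lt_or_ge q' q with hqq | hqq
    · exact h.cert_par hp' hpp.ge hpa hq' hqq.le hqb (by omega) e2 e1
    · exact h.cert_par hp hpp.le hpa' hq hqq hqb' hn e1 e2
  · rcases Nat.lt_or_ge q q' with hqq | hqq
    · exact h.cert_cross hp' hpp hpa hq hqq hqb' e2 e1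
    · exact h.cert_par hp' hpp.le hpa hq' hqq hqb (by omega) e2 e1

theorem Theta.two_diff {V : Type*} {G : SimpleGraph V} {X Y Z : ℕ → V} {a b c : ℕ}
    (h : Theta G X Y Z a b c) {x y x' y' : V} (he : G.Adj x y) (he' : G.Adj x' y')
    (h1 : Cr X Y a b x y) (h2 : Cr X Z a c x' y') :
    ∃ D, Cert G D := by
  obtain ⟨p, q, hp, hpa, hq, hqb, h5⟩ := h1
  obtain ⟨p', q', hp', hpa', hq', hqb', h6⟩ := h2
  have e1 : G.Adj (X p) (Y q) := by
    rcases h5 with ⟨rfl, rfl⟩ | ⟨rfl, rfl⟩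
    · exact he
    · exact he.symm
  have e2 : G.Adj (X p') (Z q') := by
    rcases h6 with ⟨rfl, rfl⟩ | ⟨rfl, rfl⟩
    · exact he'
    · exact he'.symm
  rcases Nat.lt_trichotomy p p' with hpp | hpp | hpp
  · exact h.cert_spread hp hpp hpa' hq hqb hq' hqb' e1 e2
  · subst hpp
    exact h.cert_hub hp hpa hq hqb hq' hqb' e1 e2
  · exact h.swap23.cert_spread hp' hpp hpa hq' hqb' hq hqb e2 e1

theorem exists_edge_notin {V : Type*} [Finite V] (G : SimpleGraph V) (T : Finset (Sym2 V))
    (h : T.card < G.edgeSet.ncard) : ∃ x y, G.Adj x y ∧ s(x, y) ∉ T := by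
  classical
  by_contra hc
  push Not at hc
  have : G.edgeSet ⊆ (T : Set (Sym2 V)) := by
    intro e he
    induction e with
    | _ x y => exact hc x y he
  have := Set.ncard_le_ncard this T.finite_toSet
  rw [Set.ncard_coe_finset] at this
  omega

/-- The edges of a path as a finset. -/
noncomputable def pathEdges {V : Type*} (X : ℕ → V) (a : ℕ) : Finset (Sym2 V) :=
  open Classical in (Finset.range a).image (fun i => s(X i, X (i + 1)))

theorem pathEdges_card {V : Type*} (X : ℕ → V) (a : ℕ) : (pathEdges X a).card ≤ a := by
  classical
  exact Finset.card_image_le.trans (by simp)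

theorem offPath_of_notin {V : Type*} {X : ℕ → V} {a : ℕ} {x y : V}
    (h : s(x, y) ∉ pathEdges X a) : OffPath X a x y := by
  classical
  intro i hi
  constructor
  · rintro ⟨rfl, rfl⟩
    exact h (Finset.mem_image.2 ⟨i, by simpa using hi, rfl⟩)
  · rintro ⟨rfl, rfl⟩
    exact h (Finset.mem_image.2 ⟨i, by simpa using hi, Sym2.eq_swap⟩)

theorem Theta.cert {V : Type*} [Finite V] {G : SimpleGraph V} {X Y Z : ℕ → V} {a b c : ℕ}
    (h : Theta G X Y Z a b c)
    (hcov : ∀ v, (∃ i ≤ a, v = X i) ∨ (∃ i ≤ b, v = Y i) ∨ (∃ i ≤ c, v = Z i))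
    (hcard : a + b + c + 2 ≤ G.edgeSet.ncard) : ∃ D, Cert G D := by
  classical
  set T := pathEdges X a ∪ (pathEdges Y b ∪ pathEdges Z c) with hT
  have hTc : T.card ≤ a + b + c := by
    have h1 := Finset.card_union_le (pathEdges X a) (pathEdges Y b ∪ pathEdges Z c)
    have h2 := Finset.card_union_le (pathEdges Y b) (pathEdges Z c)
    have := pathEdges_card X a
    have := pathEdges_card Y b
    have := pathEdges_card Z c
    rw [hT]
    omega
  obtain ⟨x, y, he, hn⟩ := exists_edge_notin G T (by omega)
  obtain ⟨x', y', he', hn'⟩ := exists_edge_notin G (insert s(x, y) T)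
    (by have := Finset.card_insert_le s(x, y) T; omega)
  simp only [hT, Finset.mem_insert, Finset.mem_union, not_or] at hn hn'
  obtain ⟨n1, n2, n3⟩ := hn
  obtain ⟨n0, m1, m2, m3⟩ := hn'
  rcases h.classify hcov he (offPath_of_notin n1) (offPath_of_notin n2) (offPath_of_notin n3)
    with h1 | h1 | h1 | h1
  · exact h1
  all_goals
    rcases h.classify hcov he' (offPath_of_notin m1) (offPath_of_notin m2)
      (offPath_of_notin m3) with h2 | h2 | h2 | h2
  · exact h2
  · exact h.two_same he' he n0 h2 h1
  · exact h.two_diff he he' h1 h2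
  · exact h.swap12.two_diff he he' h1.flip h2
  · exact h2
  · exact h.two_diff he' he h2 h1
  · exact h.swap23.two_same he' he n0 h2 h1
  · exact h.swap23.swap12.two_diff he he' h1.flip h2.flip
  · exact h2
  · exact h.swap12.two_diff he' he h2.flip h1
  · exact h.swap23.swap12.two_diff he' he h2.flip h1.flip
  · exact h.swap12.swap23.two_same he' he n0 h2 h1

/-- Two cycles `X`, `Y` of lengths `a`, `b` that share exactly one vertex. -/
structure TwoCyc {V : Type*} (G : SimpleGraph V) (X Y : ℕ → V) (a b : ℕ) : Prop where
  ha : 3 ≤ a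
  hb : 3 ≤ b
  x1 : X a = X 0
  y1 : Y b = Y 0
  xy : X 0 = Y 0
  adjX : ∀ i < a, G.Adj (X i) (X (i + 1))
  adjY : ∀ i < b, G.Adj (Y i) (Y (i + 1))
  injX : ∀ i j, i ≤ a → j ≤ a → X i = X j → i = j ∨ (i = 0 ∧ j = a) ∨ (i = a ∧ j = 0)
  injY : ∀ i j, i ≤ b → j ≤ b → Y i = Y j → i = j ∨ (i = 0 ∧ j = b) ∨ (i = b ∧ j = 0)
  injXY : ∀ i j, i ≤ a → j ≤ b → X i = Y j → (i = 0 ∨ i = a) ∧ (j = 0 ∨ j = b)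

/-- An edge joining the two cycles. -/
theorem TwoCyc.cert_across {V : Type*} {G : SimpleGraph V} {X Y : ℕ → V} {a b : ℕ}
    (h : TwoCyc G X Y a b) {p q : ℕ} (hp : 1 ≤ p) (hpa : p < a)
    (hq : 1 ≤ q) (hqb : q < b) (he : G.Adj (X p) (Y q)) : ∃ D, Cert G D := by
  obtain ⟨ha, hb, x1, y1, xy, adjX, adjY, injX, injY, injXY⟩ := h
  obtain ⟨a, rfl⟩ : ∃ b', a = b' + 1 := ⟨a - 1, by omega⟩
  obtain ⟨q, rfl⟩ : ∃ b', q = b' + 1 := ⟨q - 1, by omega⟩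
  set D : V → V → Prop := fun x y =>
    Up X 0 p x y ∨
    Up X p (a + 1) y x ∨
    (x = X p ∧ y = Y (q + 1)) ∨
    Up Y (q + 1) b x y ∨
    Up Y 0 (q + 1) y x with hDdef
  have dX : ∀ i, 0 ≤ i → i < p → D (X i) (X (i + 1)) := fun i h0 h =>
    Or.inl ⟨i, h0, h, rfl, rfl⟩
  have dX2 : ∀ i, p ≤ i → i < (a + 1) → D (X (i + 1)) (X i) := fun i h0 h =>
    Or.inr (Or.inl ⟨i, h0, h, rfl, rfl⟩)
  have dE : D (X p) (Y (q + 1)) := Or.inr (Or.inr (Or.inl ⟨rfl, rfl⟩))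
  have dY : ∀ i, (q + 1) ≤ i → i < b → D (Y i) (Y (i + 1)) := fun i h0 h =>
    Or.inr (Or.inr (Or.inr (Or.inl ⟨i, h0, h, rfl, rfl⟩)))
  have dY2 : ∀ i, 0 ≤ i → i < (q + 1) → D (Y (i + 1)) (Y i) := fun i h0 h =>
    Or.inr (Or.inr (Or.inr (Or.inr ⟨i, h0, h, rfl, rfl⟩)))
  have sub : ∀ x y, D x y → G.Adj x y := by
    rintro x y
      (⟨i, h1, h2, rfl, rfl⟩ |
      ⟨i, h1, h2, rfl, rfl⟩ |
      ⟨rfl, rfl⟩ |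
      ⟨i, h1, h2, rfl, rfl⟩ |
      ⟨i, h1, h2, rfl, rfl⟩)
    · exact adjX i (by omega)
    · exact (adjX i (by omega)).symm
    · exact he
    · exact adjY i (by omega)
    · exact (adjY i (by omega)).symm
  have anti : ∀ x y, D x y → ¬ D y x := by
    clear_value D
    subst hDdef
    rintro x y
      (⟨i, h1, h2, rfl, rfl⟩ |
      ⟨i, h1, h2, rfl, rfl⟩ |
      ⟨rfl, rfl⟩ |
      ⟨i, h1, h2, rfl, rfl⟩ |
      ⟨i, h1, h2, rfl, rfl⟩)
      (⟨j, h3, h4, h5, h6⟩ |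
      ⟨j, h3, h4, h5, h6⟩ |
      ⟨h5, h6⟩ |
      ⟨j, h3, h4, h5, h6⟩ |
      ⟨j, h3, h4, h5, h6⟩) <;>
    clear dX dX2 dE dY dY2 sub <;>
    clear adjX adjY <;>
    grind
  clear_value D
  have hne : ∀ x y, D x y → x ≠ y := fun x y h => (sub x y h).ne
  have r1 : Relation.ReflTransGen D (X 0) (X p) := (reach_up (by omega) (fun i h1 h2 => dX i (by omega) (by omega)))
  have r2 : Relation.ReflTransGen D (X 0) (X p) := by
    rw [← x1]; exact (reach_dn (by omega) (fun i h1 h2 => dX2 i (by omega) (by omega)))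
  have r3 : Relation.ReflTransGen D (X p) (Y (q + 1)) := .single dE
  have r4 : Relation.ReflTransGen D (Y (q + 1)) (X 0) := by
    rw [xy, ← y1]; exact (reach_up (by omega) (fun i h1 h2 => dY i (by omega) (by omega)))
  have r5 : Relation.ReflTransGen D (Y (q + 1)) (X 0) := by
    rw [xy]; exact (reach_dn (by omega) (fun i h1 h2 => dY2 i (by omega) (by omega)))
  have r6 : Relation.ReflTransGen D (X p) (X (a + 1)) := by
    rw [x1]; exact r3.trans r4
  have r7 : Relation.ReflTransGen D (Y b) (Y (q + 1)) := by
    rw [y1, ← xy]; exact r1.trans r3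
  have r8 : Relation.ReflTransGen D (Y 0) (Y (q + 1)) := by
    rw [← xy]; exact r1.trans r3
  have rev : ∀ x y, D x y → Relation.ReflTransGen D y x := by
    rw [hDdef]
    rintro x y
      (⟨i, h1, h2, rfl, rfl⟩ |
      ⟨i, h1, h2, rfl, rfl⟩ |
      ⟨rfl, rfl⟩ |
      ⟨i, h1, h2, rfl, rfl⟩ |
      ⟨i, h1, h2, rfl, rfl⟩) <;>
    rw [← hDdef]
    · exact rev_up dX (r3.trans r4) i h1 h2
    · exact rev_dn dX2 r6 i h1 h2
    · exact r4.trans r1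
    · exact rev_up dY r7 i h1 h2
    · exact rev_dn dY2 r8 i h1 h2
  refine ⟨D, sub, anti, rev, fun pos hi hs => ?_⟩
  have e1 : RA D (X 0) (X (0 + 1)) (X p) := ra_up (by omega) (fun i h1 h2 => dX i (by omega) (by omega)) (by
      clear * - ha hb x1 y1 xy injX injY injXY hp hpa hq hqb
      grind)
  have e2 : RA D (X 0) (X a) (X p) := ra_dn (by omega) (fun i h1 h2 => dX2 i (by omega) (by omega)) (by
      clear * - ha hb x1 y1 xy injX injY injXY hp hpa hq hqb
      grind)
  have e3 : RA D (X 0) (X p) (Y (q + 1)) := .single ⟨dE, (by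
      clear * - ha hb x1 y1 xy injX injY injXY hp hpa hq hqb
      grind)⟩
  have e4 : RA D (Y (q + 1)) (Y (q + 1 + 1)) (Y b) := ra_up (by omega) (fun i h1 h2 => dY i (by omega) (by omega)) (by
      clear * - ha hb x1 y1 xy injX injY injXY hp hpa hq hqb
      grind)
  have e5 : RA D (Y (q + 1)) (Y q) (Y 0) := ra_dn (by omega) (fun i h1 h2 => dY2 i (by omega) (by omega)) (by
      clear * - ha hb x1 y1 xy injX injY injXY hp hpa hq hqb
      grind)
  rw [y1, ← xy] at e4
  rw [← xy] at e5
  have d0 := dX2 a (by omega) (by omega)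
  rw [x1] at d0
  exact nopos_mutual hi hs hne (dX 0 (by omega) (by omega)) d0 (by
      clear * - ha hb x1 y1 xy injX injY injXY hp hpa hq hqb
      grind) (e1.trans e3) (e2.trans e3)
    (dY (q + 1) (by omega) (by omega)) (dY2 q (by omega) (by omega)) (by
      clear * - ha hb x1 y1 xy injX injY injXY hp hpa hq hqb
      grind) e4 e5

/-- A chord of one cycle that avoids the common vertex. -/
theorem TwoCyc.cert_in {V : Type*} {G : SimpleGraph V} {X Y : ℕ → V} {a b : ℕ}
    (h : TwoCyc G X Y a b) {p q : ℕ} (hp : 1 ≤ p) (hpq : p + 2 ≤ q)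
    (hq : q < a) (he : G.Adj (X p) (X q)) : ∃ D, Cert G D := by
  obtain ⟨ha, hb, x1, y1, xy, adjX, adjY, injX, injY, injXY⟩ := h
  obtain ⟨q, rfl⟩ : ∃ b', q = b' + 1 := ⟨q - 1, by omega⟩
  set D : V → V → Prop := fun x y =>
    Up X 0 a x y ∨
    (x = X p ∧ y = X (q + 1)) ∨
    Up Y 0 b x y with hDdef
  have dX : ∀ i, 0 ≤ i → i < a → D (X i) (X (i + 1)) := fun i h0 h =>
    Or.inl ⟨i, h0, h, rfl, rfl⟩
  have dE : D (X p) (X (q + 1)) := Or.inr (Or.inl ⟨rfl, rfl⟩)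
  have dY : ∀ i, 0 ≤ i → i < b → D (Y i) (Y (i + 1)) := fun i h0 h =>
    Or.inr (Or.inr ⟨i, h0, h, rfl, rfl⟩)
  have sub : ∀ x y, D x y → G.Adj x y := by
    rintro x y
      (⟨i, h1, h2, rfl, rfl⟩ |
      ⟨rfl, rfl⟩ |
      ⟨i, h1, h2, rfl, rfl⟩)
    · exact adjX i (by omega)
    · exact he
    · exact adjY i (by omega)
  have anti : ∀ x y, D x y → ¬ D y x := by
    clear_value D
    subst hDdef
    rintro x y
      (⟨i, h1, h2, rfl, rfl⟩ |
      ⟨rfl, rfl⟩ |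
      ⟨i, h1, h2, rfl, rfl⟩)
      (⟨j, h3, h4, h5, h6⟩ |
      ⟨h5, h6⟩ |
      ⟨j, h3, h4, h5, h6⟩) <;>
    clear dX dE dY sub <;>
    clear adjX adjY <;>
    grind
  clear_value D
  have hne : ∀ x y, D x y → x ≠ y := fun x y h => (sub x y h).ne
  have r1 : Relation.ReflTransGen D (X a) (X 0) := by rw [x1]
  have r2 : Relation.ReflTransGen D (Y b) (Y 0) := by rw [y1]
  have r3 : Relation.ReflTransGen D (X (q + 1)) (X a) := (reach_up (by omega) (fun i h1 h2 => dX i (by omega) (by omega)))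
  have r4 : Relation.ReflTransGen D (X 0) (X p) := (reach_up (by omega) (fun i h1 h2 => dX i (by omega) (by omega)))
  have rev : ∀ x y, D x y → Relation.ReflTransGen D y x := by
    rw [hDdef]
    rintro x y
      (⟨i, h1, h2, rfl, rfl⟩ |
      ⟨rfl, rfl⟩ |
      ⟨i, h1, h2, rfl, rfl⟩) <;>
    rw [← hDdef]
    · exact rev_up dX r1 i h1 h2
    · exact r3.trans (r1.trans r4)
    · exact rev_up dY r2 i h1 h2
  refine ⟨D, sub, anti, rev, fun pos hi hs => ?_⟩
  have e1 : RA D (X p) (X (p + 1)) (X a) := ra_up (by omega) (fun i h1 h2 => dX i (by omega) (by omega)) (by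
      clear * - ha hb x1 y1 xy injX injY injXY hp hpq hq
      grind)
  have e2 : RA D (X p) (X (q + 1)) (X a) := ra_up (by omega) (fun i h1 h2 => dX i (by omega) (by omega)) (by
      clear * - ha hb x1 y1 xy injX injY injXY hp hpq hq
      grind)
  have e3 : RA D (X (q + 1)) (X 0) (X q) := ra_up (by omega) (fun i h1 h2 => dX i (by omega) (by omega)) (by
      clear * - ha hb x1 y1 xy injX injY injXY hp hpq hq
      grind)
  have e4 : RA D (X (q + 1)) (X 0) (X p) := ra_up (by omega) (fun i h1 h2 => dX i (by omega) (by omega)) (by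
      clear * - ha hb x1 y1 xy injX injY injXY hp hpq hq
      grind)
  have e5 : RA D (X (q + 1)) (Y (0 + 1)) (Y b) := ra_up (by omega) (fun i h1 h2 => dY i (by omega) (by omega)) (by
      clear * - ha hb x1 y1 xy injX injY injXY hp hpq hq
      grind)
  have e6 : RA D (Y (0 + 1)) (X (q + 1)) (X a) := ra_up (by omega) (fun i h1 h2 => dX i (by omega) (by omega)) (by
      clear * - ha hb x1 y1 xy injX injY injXY hp hpq hq
      grind)
  have e7 : RA D (Y (0 + 1)) (X 0) (X p) := ra_up (by omega) (fun i h1 h2 => dX i (by omega) (by omega)) (by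
      clear * - ha hb x1 y1 xy injX injY injXY hp hpq hq
      grind)
  rw [y1, ← xy] at e5
  rw [x1] at e1 e2 e6
  have d0 := dY 0 (by omega) (by omega)
  rw [← xy] at d0
  exact nopos_hang hi hs hne (dX p (by omega) (by omega)) dE (by
      clear * - ha hb x1 y1 xy injX injY injXY hp hpq hq
      grind) e1 e2
    (dX q (by omega) (by omega)) dE (by
      clear * - ha hb x1 y1 xy injX injY injXY hp hpq hq
      grind) (by
      clear * - ha hb x1 y1 xy injX injY injXY hp hpq hq
      grind) e3 e4 d0 (by
      clear * - ha hb x1 y1 xy injX injY injXY hp hpq hq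
      grind) e5 e6 e7

/-- A chord of one cycle at the common vertex. -/
theorem TwoCyc.cert_pole {V : Type*} {G : SimpleGraph V} {X Y : ℕ → V} {a b : ℕ}
    (h : TwoCyc G X Y a b) {q : ℕ} (hq : 2 ≤ q)
    (hqa : q + 2 ≤ a) (he : G.Adj (X 0) (X q)) : ∃ D, Cert G D := by
  obtain ⟨ha, hb, x1, y1, xy, adjX, adjY, injX, injY, injXY⟩ := h
  obtain ⟨a, rfl⟩ : ∃ b', a = b' + 1 := ⟨a - 1, by omega⟩
  set D : V → V → Prop := fun x y =>
    Up X 0 q x y ∨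
    Up X q (a + 1) y x ∨
    (x = X q ∧ y = X 0) ∨
    Up Y 0 b x y with hDdef
  have dX : ∀ i, 0 ≤ i → i < q → D (X i) (X (i + 1)) := fun i h0 h =>
    Or.inl ⟨i, h0, h, rfl, rfl⟩
  have dX2 : ∀ i, q ≤ i → i < (a + 1) → D (X (i + 1)) (X i) := fun i h0 h =>
    Or.inr (Or.inl ⟨i, h0, h, rfl, rfl⟩)
  have dE : D (X q) (X 0) := Or.inr (Or.inr (Or.inl ⟨rfl, rfl⟩))
  have dY : ∀ i, 0 ≤ i → i < b → D (Y i) (Y (i + 1)) := fun i h0 h =>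
    Or.inr (Or.inr (Or.inr ⟨i, h0, h, rfl, rfl⟩))
  have sub : ∀ x y, D x y → G.Adj x y := by
    rintro x y
      (⟨i, h1, h2, rfl, rfl⟩ |
      ⟨i, h1, h2, rfl, rfl⟩ |
      ⟨rfl, rfl⟩ |
      ⟨i, h1, h2, rfl, rfl⟩)
    · exact adjX i (by omega)
    · exact (adjX i (by omega)).symm
    · exact he.symm
    · exact adjY i (by omega)
  have anti : ∀ x y, D x y → ¬ D y x := by
    clear_value D
    subst hDdef
    rintro x y
      (⟨i, h1, h2, rfl, rfl⟩ |
      ⟨i, h1, h2, rfl, rfl⟩ |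
      ⟨rfl, rfl⟩ |
      ⟨i, h1, h2, rfl, rfl⟩)
      (⟨j, h3, h4, h5, h6⟩ |
      ⟨j, h3, h4, h5, h6⟩ |
      ⟨h5, h6⟩ |
      ⟨j, h3, h4, h5, h6⟩) <;>
    clear dX dX2 dE dY sub <;>
    clear adjX adjY <;>
    grind
  clear_value D
  have hne : ∀ x y, D x y → x ≠ y := fun x y h => (sub x y h).ne
  have r2 : Relation.ReflTransGen D (Y b) (Y 0) := by rw [y1]
  have r3 : Relation.ReflTransGen D (X q) (X 0) := .single dE
  have r5 : Relation.ReflTransGen D (X q) (X (a + 1)) := by rw [x1]; exact r3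
  have r4 : Relation.ReflTransGen D (X 0) (X q) := (reach_up (by omega) (fun i h1 h2 => dX i (by omega) (by omega)))
  have rev : ∀ x y, D x y → Relation.ReflTransGen D y x := by
    rw [hDdef]
    rintro x y
      (⟨i, h1, h2, rfl, rfl⟩ |
      ⟨i, h1, h2, rfl, rfl⟩ |
      ⟨rfl, rfl⟩ |
      ⟨i, h1, h2, rfl, rfl⟩) <;>
    rw [← hDdef]
    · exact rev_up dX r3 i h1 h2
    · exact rev_dn dX2 r5 i h1 h2
    · exact r4
    · exact rev_up dY r2 i h1 h2
  refine ⟨D, sub, anti, rev, fun pos hi hs => ?_⟩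
  have e1 : RA D (X 0) (X (0 + 1)) (X q) := ra_up (by omega) (fun i h1 h2 => dX i (by omega) (by omega)) (by
      clear * - ha hb x1 y1 xy injX injY injXY hq hqa
      grind)
  have e2 : RA D (X 0) (X a) (X q) := ra_dn (by omega) (fun i h1 h2 => dX2 i (by omega) (by omega)) (by
      clear * - ha hb x1 y1 xy injX injY injXY hq hqa
      grind)
  have e3 : RA D (X q) (Y (0 + 1)) (Y b) := ra_up (by omega) (fun i h1 h2 => dY i (by omega) (by omega)) (by
      clear * - ha hb x1 y1 xy injX injY injXY hq hqa
      grind)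
  have e4 : RA D (Y (0 + 1)) (X q) (X 0) := .single ⟨dE, (by
      clear * - ha hb x1 y1 xy injX injY injXY hq hqa
      grind)⟩
  have e5 : RA D (X a) (X (0 + 1)) (X q) := ra_up (by omega) (fun i h1 h2 => dX i (by omega) (by omega)) (by
      clear * - ha hb x1 y1 xy injX injY injXY hq hqa
      grind)
  have e6 : RA D (X a) (X q) (X 0) := .single ⟨dE, (by
      clear * - ha hb x1 y1 xy injX injY injXY hq hqa
      grind)⟩
  have e7 : RA D (X (0 + 1)) (X a) (X q) := ra_dn (by omega) (fun i h1 h2 => dX2 i (by omega) (by omega)) (by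
      clear * - ha hb x1 y1 xy injX injY injXY hq hqa
      grind)
  have e8 : RA D (X (0 + 1)) (X q) (X 0) := .single ⟨dE, (by
      clear * - ha hb x1 y1 xy injX injY injXY hq hqa
      grind)⟩
  rw [y1, ← xy] at e3
  have d0 := dY 0 (by omega) (by omega)
  rw [← xy] at d0
  have d1 := dX2 a (by omega) (by omega)
  rw [x1] at d1
  exact nopos_pole hi hs hne d0 (dX 0 (by omega) (by omega)) d1 (by
      clear * - ha hb x1 y1 xy injX injY injXY hq hqa
      grind) (by
      clear * - ha hb x1 y1 xy injX injY injXY hq hqa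
      grind) (by
      clear * - ha hb x1 y1 xy injX injY injXY hq hqa
      grind) (by
      clear * - ha hb x1 y1 xy injX injY injXY hq hqa
      grind) e1 e2 e3 e4
    (e5.trans e6) (e7.trans e8)

theorem TwoCyc.swap {V : Type*} {G : SimpleGraph V} {X Y : ℕ → V} {a b : ℕ}
    (h : TwoCyc G X Y a b) : TwoCyc G Y X b a := by
  obtain ⟨ha, hb, x1, y1, xy, adjX, adjY, injX, injY, injXY⟩ := h
  exact ⟨hb, ha, y1, x1, xy.symm, adjY, adjX, injY, injX,
    fun i j hi hj hij => (injXY j i hj hi hij.symm).symm⟩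

theorem TwoCyc.cert_same {V : Type*} {G : SimpleGraph V} {X Y : ℕ → V} {a b : ℕ}
    (h : TwoCyc G X Y a b) {i j : ℕ} (hi : i < a) (hj : j < a) (hij : i < j)
    (he : G.Adj (X i) (X j)) (hX : OffPath X a (X i) (X j)) : ∃ D, Cert G D := by
  have h2 : i + 2 ≤ j := by
    by_contra hlt
    obtain rfl : j = i + 1 := by omega
    exact (hX i hi).1 ⟨rfl, rfl⟩
  by_cases h0 : i = 0
  · subst h0
    refine h.cert_pole h2 ?_ he
    by_contra hlt
    obtain rfl : a = j + 1 := by omega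
    exact (hX j (by omega)).2 ⟨rfl, h.x1.symm⟩
  · exact h.cert_in (by omega) h2 hj he

theorem TwoCyc.cert_same' {V : Type*} {G : SimpleGraph V} {X Y : ℕ → V} {a b : ℕ}
    (h : TwoCyc G X Y a b) {i j : ℕ} (hi : i < a) (hj : j < a)
    (he : G.Adj (X i) (X j)) (hX : OffPath X a (X i) (X j)) : ∃ D, Cert G D := by
  rcases Nat.lt_trichotomy i j with hij | hij | hij
  · exact h.cert_same hi hj hij he hX
  · subst hij
    exact absurd rfl he.ne
  · exact h.cert_same hj hi hij he.symm hX.symm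

theorem TwoCyc.cert_mixed {V : Type*} {G : SimpleGraph V} {X Y : ℕ → V} {a b : ℕ}
    (h : TwoCyc G X Y a b) {i j : ℕ} (hi : i < a) (hj : j < b)
    (he : G.Adj (X i) (Y j)) (hX : OffPath X a (X i) (Y j)) (hY : OffPath Y b (X i) (Y j)) :
    ∃ D, Cert G D := by
  have := h.ha
  have := h.hb
  by_cases h0 : i = 0
  · subst h0
    rw [h.xy] at *
    exact h.swap.cert_same' (by omega) hj he hY
  by_cases h1 : j = 0
  · subst h1
    rw [← h.xy] at *
    exact h.cert_same' hi (by omega) he hX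
  exact h.cert_across (by omega) hi (by omega) hj he

theorem TwoCyc.cert {V : Type*} {G : SimpleGraph V} {X Y : ℕ → V} {a b : ℕ}
    (h : TwoCyc G X Y a b) {x y : V} (hx : (∃ i < a, x = X i) ∨ ∃ i < b, x = Y i)
    (hy : (∃ i < a, y = X i) ∨ ∃ i < b, y = Y i)
    (he : G.Adj x y) (hX : OffPath X a x y) (hY : OffPath Y b x y) : ∃ D, Cert G D := by
  rcases hx with ⟨i, hi, rfl⟩ | ⟨i, hi, rfl⟩ <;> rcases hy with ⟨j, hj, rfl⟩ | ⟨j, hj, rfl⟩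
  · exact h.cert_same' hi hj he hX
  · exact h.cert_mixed hi hj he hX hY
  · exact h.cert_mixed hj hi he.symm hX.symm hY.symm
  · exact h.swap.cert_same' hi hj he hY

/-- `f` enumerates a path on `n` vertices of `G`. -/
structure HP {V : Type*} (G : SimpleGraph V) (f : ℕ → V) (n : ℕ) : Prop where
  inj : ∀ i j, i < n → j < n → f i = f j → i = j
  adj : ∀ i, i + 1 < n → G.Adj (f i) (f (i + 1))

/-- Three consecutive overlapping intervals. -/
theorem HP.cert_A {V : Type*} {G : SimpleGraph V} {f : ℕ → V} {n : ℕ}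
    (h : HP G f n) {l j1 i2 j2 i3 j3 : ℕ} (h1 : l < i2) (h2 : i2 < j1)
    (h3 : j1 < i3) (h4 : i3 < j2) (h5 : j2 < j3) (h6 : j3 < n) (c1 : G.Adj (f l) (f j1))
    (c2 : G.Adj (f i2) (f j2)) (c3 : G.Adj (f i3) (f j3)) : ∃ D, Cert G D := by
  obtain ⟨inj, adjX⟩ := h
  obtain ⟨i2, rfl⟩ : ∃ b', i2 = b' + 1 := ⟨i2 - 1, by omega⟩
  set D : V → V → Prop := fun x y =>
    Up f (i2 + 1) j2 x y ∨
    Up f l (i2 + 1) y x ∨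
    Up f j2 j3 y x ∨
    (x = f l ∧ y = f j1) ∨
    (x = f j2 ∧ y = f (i2 + 1)) ∨
    (x = f i3 ∧ y = f j3) with hDdef
  have dU : ∀ i, (i2 + 1) ≤ i → i < j2 → D (f i) (f (i + 1)) := fun i h0 h =>
    Or.inl ⟨i, h0, h, rfl, rfl⟩
  have dL : ∀ i, l ≤ i → i < (i2 + 1) → D (f (i + 1)) (f i) := fun i h0 h =>
    Or.inr (Or.inl ⟨i, h0, h, rfl, rfl⟩)
  have dR : ∀ i, j2 ≤ i → i < j3 → D (f (i + 1)) (f i) := fun i h0 h =>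
    Or.inr (Or.inr (Or.inl ⟨i, h0, h, rfl, rfl⟩))
  have d1 : D (f l) (f j1) := Or.inr (Or.inr (Or.inr (Or.inl ⟨rfl, rfl⟩)))
  have d2 : D (f j2) (f (i2 + 1)) := Or.inr (Or.inr (Or.inr (Or.inr (Or.inl ⟨rfl, rfl⟩))))
  have d3 : D (f i3) (f j3) := Or.inr (Or.inr (Or.inr (Or.inr (Or.inr ⟨rfl, rfl⟩))))
  have sub : ∀ x y, D x y → G.Adj x y := by
    rintro x y
      (⟨i, h1, h2, rfl, rfl⟩ |
      ⟨i, h1, h2, rfl, rfl⟩ |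
      ⟨i, h1, h2, rfl, rfl⟩ |
      ⟨rfl, rfl⟩ |
      ⟨rfl, rfl⟩ |
      ⟨rfl, rfl⟩)
    · exact adjX i (by omega)
    · exact (adjX i (by omega)).symm
    · exact (adjX i (by omega)).symm
    · exact c1
    · exact c2.symm
    · exact c3
  have anti : ∀ x y, D x y → ¬ D y x := by
    clear_value D
    subst hDdef
    rintro x y
      (⟨i, h1, h2, rfl, rfl⟩ |
      ⟨i, h1, h2, rfl, rfl⟩ |
      ⟨i, h1, h2, rfl, rfl⟩ |
      ⟨rfl, rfl⟩ |
      ⟨rfl, rfl⟩ |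
      ⟨rfl, rfl⟩)
      (⟨j, h3, h4, h5, h6⟩ |
      ⟨j, h3, h4, h5, h6⟩ |
      ⟨j, h3, h4, h5, h6⟩ |
      ⟨h5, h6⟩ |
      ⟨h5, h6⟩ |
      ⟨h5, h6⟩) <;>
    clear dU dL dR d1 d2 d3 sub <;>
    clear adjX <;>
    grind
  clear_value D
  have hne : ∀ x y, D x y → x ≠ y := fun x y h => (sub x y h).ne
  have r1 : Relation.ReflTransGen D (f l) (f j1) := .single d1
  have r2 : Relation.ReflTransGen D (f j2) (f (i2 + 1)) := .single d2
  have r3 : Relation.ReflTransGen D (f i3) (f j3) := .single d3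
  have r4 : Relation.ReflTransGen D (f j1) (f j2) := (reach_up (by omega) (fun i h1 h2 => dU i (by omega) (by omega)))
  have r5 : Relation.ReflTransGen D (f (i2 + 1)) (f i3) := (reach_up (by omega) (fun i h1 h2 => dU i (by omega) (by omega)))
  have r6 : Relation.ReflTransGen D (f (i2 + 1)) (f j2) := (reach_up (by omega) (fun i h1 h2 => dU i (by omega) (by omega)))
  have r7 : Relation.ReflTransGen D (f (i2 + 1)) (f l) := (reach_dn (by omega) (fun i h1 h2 => dL i (by omega) (by omega)))
  have r8 : Relation.ReflTransGen D (f j3) (f j2) := (reach_dn (by omega) (fun i h1 h2 => dR i (by omega) (by omega)))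
  have rev : ∀ x y, D x y → Relation.ReflTransGen D y x := by
    rw [hDdef]
    rintro x y
      (⟨i, h1, h2, rfl, rfl⟩ |
      ⟨i, h1, h2, rfl, rfl⟩ |
      ⟨i, h1, h2, rfl, rfl⟩ |
      ⟨rfl, rfl⟩ |
      ⟨rfl, rfl⟩ |
      ⟨rfl, rfl⟩) <;>
    rw [← hDdef]
    · exact rev_up dU r2 i h1 h2
    · exact rev_dn dL (r1.trans (r4.trans r2)) i h1 h2
    · exact rev_dn dR (r2.trans (r5.trans r3)) i h1 h2
    · exact r4.trans (r2.trans r7)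
    · exact r6
    · exact r8.trans (r2.trans r5)
  refine ⟨D, sub, anti, rev, fun pos hi hs => ?_⟩
  have e1 : RA D (f (i2 + 1)) (f (i2 + 1 + 1)) (f i3) := ra_up (by omega) (fun i h1 h2 => dU i (by omega) (by omega)) (by
      clear * - inj h1 h2 h3 h4 h5 h6
      grind)
  have e2 : RA D (f (i2 + 1)) (f i2) (f l) := ra_dn (by omega) (fun i h1 h2 => dL i (by omega) (by omega)) (by
      clear * - inj h1 h2 h3 h4 h5 h6
      grind)
  have e3 : RA D (f (i2 + 1)) (f l) (f j1) := .single ⟨d1, (by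
      clear * - inj h1 h2 h3 h4 h5 h6
      grind)⟩
  have e4 : RA D (f (i2 + 1)) (f j1) (f i3) := ra_up (by omega) (fun i h1 h2 => dU i (by omega) (by omega)) (by
      clear * - inj h1 h2 h3 h4 h5 h6
      grind)
  have e5 : RA D (f i3) (f (i3 + 1)) (f j2) := ra_up (by omega) (fun i h1 h2 => dU i (by omega) (by omega)) (by
      clear * - inj h1 h2 h3 h4 h5 h6
      grind)
  have e6 : RA D (f i3) (f j3) (f j2) := ra_dn (by omega) (fun i h1 h2 => dR i (by omega) (by omega)) (by
      clear * - inj h1 h2 h3 h4 h5 h6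
      grind)
  have e7 : RA D (f i3) (f j2) (f (i2 + 1)) := .single ⟨d2, (by
      clear * - inj h1 h2 h3 h4 h5 h6
      grind)⟩
  exact nopos_mutual hi hs hne (dU (i2 + 1) (by omega) (by omega)) (dL i2 (by omega) (by omega)) (by
      clear * - inj h1 h2 h3 h4 h5 h6
      grind)
    e1 (e2.trans (e3.trans e4)) (dU i3 (by omega) (by omega)) d3 (by
      clear * - inj h1 h2 h3 h4 h5 h6
      grind)
    (e5.trans e7) (e6.trans e7)

/-- A cycle followed by two overlapping intervals. -/
theorem HP.cert_B {V : Type*} {G : SimpleGraph V} {f : ℕ → V} {n : ℕ}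
    (h : HP G f n) {l v i3 j2 j3 : ℕ} (h1 : l + 2 ≤ v) (h2 : v < i3)
    (h3 : i3 < j2) (h4 : j2 < j3) (h6 : j3 < n) (c1 : G.Adj (f l) (f v))
    (c2 : G.Adj (f v) (f j2)) (c3 : G.Adj (f i3) (f j3)) : ∃ D, Cert G D := by
  obtain ⟨inj, adjX⟩ := h
  obtain ⟨v, rfl⟩ : ∃ b', v = b' + 1 := ⟨v - 1, by omega⟩
  obtain ⟨j2, rfl⟩ : ∃ b', j2 = b' + 1 := ⟨j2 - 1, by omega⟩
  set D : V → V → Prop := fun x y =>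
    Up f (v + 1) (j2 + 1) x y ∨
    Up f l (v + 1) y x ∨
    Up f (j2 + 1) j3 y x ∨
    (x = f l ∧ y = f (v + 1)) ∨
    (x = f (j2 + 1) ∧ y = f (v + 1)) ∨
    (x = f i3 ∧ y = f j3) with hDdef
  have dU : ∀ i, (v + 1) ≤ i → i < (j2 + 1) → D (f i) (f (i + 1)) := fun i h0 h =>
    Or.inl ⟨i, h0, h, rfl, rfl⟩
  have dL : ∀ i, l ≤ i → i < (v + 1) → D (f (i + 1)) (f i) := fun i h0 h =>
    Or.inr (Or.inl ⟨i, h0, h, rfl, rfl⟩)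
  have dR : ∀ i, (j2 + 1) ≤ i → i < j3 → D (f (i + 1)) (f i) := fun i h0 h =>
    Or.inr (Or.inr (Or.inl ⟨i, h0, h, rfl, rfl⟩))
  have d1 : D (f l) (f (v + 1)) := Or.inr (Or.inr (Or.inr (Or.inl ⟨rfl, rfl⟩)))
  have d2 : D (f (j2 + 1)) (f (v + 1)) := Or.inr (Or.inr (Or.inr (Or.inr (Or.inl ⟨rfl, rfl⟩))))
  have d3 : D (f i3) (f j3) := Or.inr (Or.inr (Or.inr (Or.inr (Or.inr ⟨rfl, rfl⟩))))
  have sub : ∀ x y, D x y → G.Adj x y := by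
    rintro x y
      (⟨i, h1, h2, rfl, rfl⟩ |
      ⟨i, h1, h2, rfl, rfl⟩ |
      ⟨i, h1, h2, rfl, rfl⟩ |
      ⟨rfl, rfl⟩ |
      ⟨rfl, rfl⟩ |
      ⟨rfl, rfl⟩)
    · exact adjX i (by omega)
    · exact (adjX i (by omega)).symm
    · exact (adjX i (by omega)).symm
    · exact c1
    · exact c2.symm
    · exact c3
  have anti : ∀ x y, D x y → ¬ D y x := by
    clear_value D
    subst hDdef
    rintro x y
      (⟨i, h1, h2, rfl, rfl⟩ |
      ⟨i, h1, h2, rfl, rfl⟩ |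
      ⟨i, h1, h2, rfl, rfl⟩ |
      ⟨rfl, rfl⟩ |
      ⟨rfl, rfl⟩ |
      ⟨rfl, rfl⟩)
      (⟨j, h3, h4, h5, h6⟩ |
      ⟨j, h3, h4, h5, h6⟩ |
      ⟨j, h3, h4, h5, h6⟩ |
      ⟨h5, h6⟩ |
      ⟨h5, h6⟩ |
      ⟨h5, h6⟩) <;>
    clear dU dL dR d1 d2 d3 sub <;>
    clear adjX <;>
    grind
  clear_value D
  have hne : ∀ x y, D x y → x ≠ y := fun x y h => (sub x y h).ne
  have r1 : Relation.ReflTransGen D (f l) (f (v + 1)) := .single d1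
  have r2 : Relation.ReflTransGen D (f (j2 + 1)) (f (v + 1)) := .single d2
  have r3 : Relation.ReflTransGen D (f i3) (f j3) := .single d3
  have r5 : Relation.ReflTransGen D (f (v + 1)) (f i3) := (reach_up (by omega) (fun i h1 h2 => dU i (by omega) (by omega)))
  have r6 : Relation.ReflTransGen D (f (v + 1)) (f (j2 + 1)) := (reach_up (by omega) (fun i h1 h2 => dU i (by omega) (by omega)))
  have r7 : Relation.ReflTransGen D (f (v + 1)) (f l) := (reach_dn (by omega) (fun i h1 h2 => dL i (by omega) (by omega)))
  have r8 : Relation.ReflTransGen D (f j3) (f (j2 + 1)) := (reach_dn (by omega) (fun i h1 h2 => dR i (by omega) (by omega)))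
  have rev : ∀ x y, D x y → Relation.ReflTransGen D y x := by
    rw [hDdef]
    rintro x y
      (⟨i, h1, h2, rfl, rfl⟩ |
      ⟨i, h1, h2, rfl, rfl⟩ |
      ⟨i, h1, h2, rfl, rfl⟩ |
      ⟨rfl, rfl⟩ |
      ⟨rfl, rfl⟩ |
      ⟨rfl, rfl⟩) <;>
    rw [← hDdef]
    · exact rev_up dU r2 i h1 h2
    · exact rev_dn dL r1 i h1 h2
    · exact rev_dn dR (r2.trans (r5.trans r3)) i h1 h2
    · exact r7
    · exact r6
    · exact r8.trans (r2.trans r5)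
  refine ⟨D, sub, anti, rev, fun pos hi hs => ?_⟩
  have e1 : RA D (f i3) (f (i3 + 1)) (f (j2 + 1)) := ra_up (by omega) (fun i h1 h2 => dU i (by omega) (by omega)) (by
      clear * - inj h1 h2 h3 h4 h6
      grind)
  have e2 : RA D (f i3) (f (j2 + 1)) (f (v + 1)) := .single ⟨d2, (by
      clear * - inj h1 h2 h3 h4 h6
      grind)⟩
  have e3 : RA D (f i3) (f j3) (f (j2 + 1)) := ra_dn (by omega) (fun i h1 h2 => dR i (by omega) (by omega)) (by
      clear * - inj h1 h2 h3 h4 h6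
      grind)
  have e4 : RA D (f (j2 + 1)) (f (v + 1)) (f j2) := ra_up (by omega) (fun i h1 h2 => dU i (by omega) (by omega)) (by
      clear * - inj h1 h2 h3 h4 h6
      grind)
  have e5 : RA D (f (j2 + 1)) (f (v + 1)) (f i3) := ra_up (by omega) (fun i h1 h2 => dU i (by omega) (by omega)) (by
      clear * - inj h1 h2 h3 h4 h6
      grind)
  have e6 : RA D (f (j2 + 1)) (f i3) (f j3) := .single ⟨d3, (by
      clear * - inj h1 h2 h3 h4 h6
      grind)⟩
  have e7 : RA D (f (j2 + 1)) (f j3) (f (j2 + 1 + 1)) := ra_dn (by omega) (fun i h1 h2 => dR i (by omega) (by omega)) (by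
      clear * - inj h1 h2 h3 h4 h6
      grind)
  have e8 : RA D (f (j2 + 1)) (f v) (f l) := ra_dn (by omega) (fun i h1 h2 => dL i (by omega) (by omega)) (by
      clear * - inj h1 h2 h3 h4 h6
      grind)
  have e9 : RA D (f (j2 + 1)) (f l) (f (v + 1)) := .single ⟨d1, (by
      clear * - inj h1 h2 h3 h4 h6
      grind)⟩
  have e10 : RA D (f v) (f (j2 + 1)) (f (v + 1)) := .single ⟨d2, (by
      clear * - inj h1 h2 h3 h4 h6
      grind)⟩
  have e11 : RA D (f v) (f (v + 1)) (f i3) := ra_up (by omega) (fun i h1 h2 => dU i (by omega) (by omega)) (by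
      clear * - inj h1 h2 h3 h4 h6
      grind)
  exact nopos_hang hi hs hne (dU i3 (by omega) (by omega)) d3 (by
      clear * - inj h1 h2 h3 h4 h6
      grind) (e1.trans e2) (e3.trans e2)
    (dU j2 (by omega) (by omega)) (dR (j2 + 1) (by omega) (by omega)) (by
      clear * - inj h1 h2 h3 h4 h6
      grind) (by
      clear * - inj h1 h2 h3 h4 h6
      grind) e4
    (e5.trans (e6.trans e7)) (dL v (by omega) (by omega)) (by
      clear * - inj h1 h2 h3 h4 h6
      grind) (e8.trans e9) e10 e11

/-- Two overlapping intervals followed by a cycle. -/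
theorem HP.cert_C {V : Type*} {G : SimpleGraph V} {f : ℕ → V} {n : ℕ}
    (h : HP G f n) {l i2 j1 v j3 : ℕ} (h1 : l < i2) (h2 : i2 < j1)
    (h3 : j1 < v) (h4 : v + 2 ≤ j3) (h6 : j3 < n) (c1 : G.Adj (f l) (f j1))
    (c2 : G.Adj (f i2) (f v)) (c3 : G.Adj (f v) (f j3)) : ∃ D, Cert G D := by
  obtain ⟨inj, adjX⟩ := h
  obtain ⟨i2, rfl⟩ : ∃ b', i2 = b' + 1 := ⟨i2 - 1, by omega⟩
  obtain ⟨j1, rfl⟩ : ∃ b', j1 = b' + 1 := ⟨j1 - 1, by omega⟩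
  set D : V → V → Prop := fun x y =>
    Up f (i2 + 1) v x y ∨
    Up f l (i2 + 1) y x ∨
    Up f v j3 y x ∨
    (x = f l ∧ y = f (j1 + 1)) ∨
    (x = f v ∧ y = f (i2 + 1)) ∨
    (x = f v ∧ y = f j3) with hDdef
  have dU : ∀ i, (i2 + 1) ≤ i → i < v → D (f i) (f (i + 1)) := fun i h0 h =>
    Or.inl ⟨i, h0, h, rfl, rfl⟩
  have dL : ∀ i, l ≤ i → i < (i2 + 1) → D (f (i + 1)) (f i) := fun i h0 h =>
    Or.inr (Or.inl ⟨i, h0, h, rfl, rfl⟩)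
  have dR : ∀ i, v ≤ i → i < j3 → D (f (i + 1)) (f i) := fun i h0 h =>
    Or.inr (Or.inr (Or.inl ⟨i, h0, h, rfl, rfl⟩))
  have d1 : D (f l) (f (j1 + 1)) := Or.inr (Or.inr (Or.inr (Or.inl ⟨rfl, rfl⟩)))
  have d2 : D (f v) (f (i2 + 1)) := Or.inr (Or.inr (Or.inr (Or.inr (Or.inl ⟨rfl, rfl⟩))))
  have d3 : D (f v) (f j3) := Or.inr (Or.inr (Or.inr (Or.inr (Or.inr ⟨rfl, rfl⟩))))
  have sub : ∀ x y, D x y → G.Adj x y := by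
    rintro x y
      (⟨i, h1, h2, rfl, rfl⟩ |
      ⟨i, h1, h2, rfl, rfl⟩ |
      ⟨i, h1, h2, rfl, rfl⟩ |
      ⟨rfl, rfl⟩ |
      ⟨rfl, rfl⟩ |
      ⟨rfl, rfl⟩)
    · exact adjX i (by omega)
    · exact (adjX i (by omega)).symm
    · exact (adjX i (by omega)).symm
    · exact c1
    · exact c2.symm
    · exact c3
  have anti : ∀ x y, D x y → ¬ D y x := by
    clear_value D
    subst hDdef
    rintro x y
      (⟨i, h1, h2, rfl, rfl⟩ |
      ⟨i, h1, h2, rfl, rfl⟩ |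
      ⟨i, h1, h2, rfl, rfl⟩ |
      ⟨rfl, rfl⟩ |
      ⟨rfl, rfl⟩ |
      ⟨rfl, rfl⟩)
      (⟨j, h3, h4, h5, h6⟩ |
      ⟨j, h3, h4, h5, h6⟩ |
      ⟨j, h3, h4, h5, h6⟩ |
      ⟨h5, h6⟩ |
      ⟨h5, h6⟩ |
      ⟨h5, h6⟩) <;>
    clear dU dL dR d1 d2 d3 sub <;>
    clear adjX <;>
    grind
  clear_value D
  have hne : ∀ x y, D x y → x ≠ y := fun x y h => (sub x y h).ne
  have r1 : Relation.ReflTransGen D (f l) (f (j1 + 1)) := .single d1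
  have r2 : Relation.ReflTransGen D (f v) (f (i2 + 1)) := .single d2
  have r3 : Relation.ReflTransGen D (f v) (f j3) := .single d3
  have r4 : Relation.ReflTransGen D (f (j1 + 1)) (f v) := (reach_up (by omega) (fun i h1 h2 => dU i (by omega) (by omega)))
  have r6 : Relation.ReflTransGen D (f (i2 + 1)) (f v) := (reach_up (by omega) (fun i h1 h2 => dU i (by omega) (by omega)))
  have r7 : Relation.ReflTransGen D (f (i2 + 1)) (f l) := (reach_dn (by omega) (fun i h1 h2 => dL i (by omega) (by omega)))
  have r8 : Relation.ReflTransGen D (f j3) (f v) := (reach_dn (by omega) (fun i h1 h2 => dR i (by omega) (by omega)))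
  have rev : ∀ x y, D x y → Relation.ReflTransGen D y x := by
    rw [hDdef]
    rintro x y
      (⟨i, h1, h2, rfl, rfl⟩ |
      ⟨i, h1, h2, rfl, rfl⟩ |
      ⟨i, h1, h2, rfl, rfl⟩ |
      ⟨rfl, rfl⟩ |
      ⟨rfl, rfl⟩ |
      ⟨rfl, rfl⟩) <;>
    rw [← hDdef]
    · exact rev_up dU r2 i h1 h2
    · exact rev_dn dL (r1.trans (r4.trans r2)) i h1 h2
    · exact rev_dn dR r3 i h1 h2
    · exact r4.trans (r2.trans r7)
    · exact r6
    · exact r8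
  refine ⟨D, sub, anti, rev, fun pos hi hs => ?_⟩
  have e1 : RA D (f (i2 + 1)) (f (i2 + 1 + 1)) (f v) := ra_up (by omega) (fun i h1 h2 => dU i (by omega) (by omega)) (by
      clear * - inj h1 h2 h3 h4 h6
      grind)
  have e2 : RA D (f (i2 + 1)) (f i2) (f l) := ra_dn (by omega) (fun i h1 h2 => dL i (by omega) (by omega)) (by
      clear * - inj h1 h2 h3 h4 h6
      grind)
  have e3 : RA D (f (i2 + 1)) (f l) (f (j1 + 1)) := .single ⟨d1, (by
      clear * - inj h1 h2 h3 h4 h6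
      grind)⟩
  have e4 : RA D (f (i2 + 1)) (f (j1 + 1)) (f v) := ra_up (by omega) (fun i h1 h2 => dU i (by omega) (by omega)) (by
      clear * - inj h1 h2 h3 h4 h6
      grind)
  have e5 : RA D (f (j1 + 1)) (f v) (f (i2 + 1)) := .single ⟨d2, (by
      clear * - inj h1 h2 h3 h4 h6
      grind)⟩
  have e6 : RA D (f (j1 + 1)) (f (i2 + 1)) (f j1) := ra_up (by omega) (fun i h1 h2 => dU i (by omega) (by omega)) (by
      clear * - inj h1 h2 h3 h4 h6
      grind)
  have e7 : RA D (f (j1 + 1)) (f (i2 + 1)) (f l) := ra_dn (by omega) (fun i h1 h2 => dL i (by omega) (by omega)) (by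
      clear * - inj h1 h2 h3 h4 h6
      grind)
  have e8 : RA D (f (j1 + 1)) (f j3) (f v) := ra_dn (by omega) (fun i h1 h2 => dR i (by omega) (by omega)) (by
      clear * - inj h1 h2 h3 h4 h6
      grind)
  have e9 : RA D (f j3) (f (j1 + 1)) (f v) := ra_up (by omega) (fun i h1 h2 => dU i (by omega) (by omega)) (by
      clear * - inj h1 h2 h3 h4 h6
      grind)
  have e10 : RA D (f j3) (f v) (f (i2 + 1)) := .single ⟨d2, (by
      clear * - inj h1 h2 h3 h4 h6
      grind)⟩
  exact nopos_hang hi hs hne (dU (i2 + 1) (by omega) (by omega)) (dL i2 (by omega) (by omega)) (by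
      clear * - inj h1 h2 h3 h4 h6
      grind)
    e1 (e2.trans (e3.trans e4)) (dU j1 (by omega) (by omega)) d1 (by
      clear * - inj h1 h2 h3 h4 h6
      grind) (by
      clear * - inj h1 h2 h3 h4 h6
      grind) (e5.trans e6)
    (e5.trans e7) d3 (by
      clear * - inj h1 h2 h3 h4 h6
      grind) e8 e9 e10

/-- A chain of four cycles. -/
theorem HP.cert_D {V : Type*} {G : SimpleGraph V} {f : ℕ → V} {n : ℕ}
    (h : HP G f n) {l a b c r : ℕ} (h1 : l + 2 ≤ a) (h2 : a + 2 ≤ b)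
    (h3 : b + 2 ≤ c) (h4 : c + 2 ≤ r) (h6 : r < n) (c1 : G.Adj (f l) (f a))
    (c2 : G.Adj (f a) (f b)) (c3 : G.Adj (f b) (f c)) (c4 : G.Adj (f c) (f r)) :
    ∃ D, Cert G D := by
  obtain ⟨inj, adjX⟩ := h
  obtain ⟨a, rfl⟩ : ∃ b', a = b' + 1 := ⟨a - 1, by omega⟩
  obtain ⟨b, rfl⟩ : ∃ b', b = b' + 1 := ⟨b - 1, by omega⟩
  set D : V → V → Prop := fun x y =>
    Up f l (b + 1) y x ∨
    Up f (b + 1) c x y ∨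
    Up f c r y x ∨
    (x = f l ∧ y = f (a + 1)) ∨
    (x = f (a + 1) ∧ y = f (b + 1)) ∨
    (x = f c ∧ y = f (b + 1)) ∨
    (x = f c ∧ y = f r) with hDdef
  have dL : ∀ i, l ≤ i → i < (b + 1) → D (f (i + 1)) (f i) := fun i h0 h =>
    Or.inl ⟨i, h0, h, rfl, rfl⟩
  have dU : ∀ i, (b + 1) ≤ i → i < c → D (f i) (f (i + 1)) := fun i h0 h =>
    Or.inr (Or.inl ⟨i, h0, h, rfl, rfl⟩)
  have dR : ∀ i, c ≤ i → i < r → D (f (i + 1)) (f i) := fun i h0 h =>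
    Or.inr (Or.inr (Or.inl ⟨i, h0, h, rfl, rfl⟩))
  have d1 : D (f l) (f (a + 1)) := Or.inr (Or.inr (Or.inr (Or.inl ⟨rfl, rfl⟩)))
  have d2 : D (f (a + 1)) (f (b + 1)) := Or.inr (Or.inr (Or.inr (Or.inr (Or.inl ⟨rfl, rfl⟩))))
  have d3 : D (f c) (f (b + 1)) := Or.inr (Or.inr (Or.inr (Or.inr (Or.inr (Or.inl ⟨rfl, rfl⟩)))))
  have d4 : D (f c) (f r) := Or.inr (Or.inr (Or.inr (Or.inr (Or.inr (Or.inr ⟨rfl, rfl⟩)))))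
  have sub : ∀ x y, D x y → G.Adj x y := by
    rintro x y
      (⟨i, h1, h2, rfl, rfl⟩ |
      ⟨i, h1, h2, rfl, rfl⟩ |
      ⟨i, h1, h2, rfl, rfl⟩ |
      ⟨rfl, rfl⟩ |
      ⟨rfl, rfl⟩ |
      ⟨rfl, rfl⟩ |
      ⟨rfl, rfl⟩)
    · exact (adjX i (by omega)).symm
    · exact adjX i (by omega)
    · exact (adjX i (by omega)).symm
    · exact c1
    · exact c2
    · exact c3.symm
    · exact c4
  have anti : ∀ x y, D x y → ¬ D y x := by
    clear_value D
    subst hDdef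
    rintro x y
      (⟨i, h1, h2, rfl, rfl⟩ |
      ⟨i, h1, h2, rfl, rfl⟩ |
      ⟨i, h1, h2, rfl, rfl⟩ |
      ⟨rfl, rfl⟩ |
      ⟨rfl, rfl⟩ |
      ⟨rfl, rfl⟩ |
      ⟨rfl, rfl⟩)
      (⟨j, h3, h4, h5, h6⟩ |
      ⟨j, h3, h4, h5, h6⟩ |
      ⟨j, h3, h4, h5, h6⟩ |
      ⟨h5, h6⟩ |
      ⟨h5, h6⟩ |
      ⟨h5, h6⟩ |
      ⟨h5, h6⟩) <;>
    clear dL dU dR d1 d2 d3 d4 sub <;>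
    clear adjX <;>
    grind
  clear_value D
  have hne : ∀ x y, D x y → x ≠ y := fun x y h => (sub x y h).ne
  have r1 : Relation.ReflTransGen D (f l) (f (a + 1)) := .single d1
  have r2 : Relation.ReflTransGen D (f (a + 1)) (f (b + 1)) := .single d2
  have r3 : Relation.ReflTransGen D (f c) (f (b + 1)) := .single d3
  have r9 : Relation.ReflTransGen D (f c) (f r) := .single d4
  have r4 : Relation.ReflTransGen D (f (b + 1)) (f c) := (reach_up (by omega) (fun i h1 h2 => dU i (by omega) (by omega)))
  have r6 : Relation.ReflTransGen D (f (b + 1)) (f (a + 1)) := (reach_dn (by omega) (fun i h1 h2 => dL i (by omega) (by omega)))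
  have r7 : Relation.ReflTransGen D (f (a + 1)) (f l) := (reach_dn (by omega) (fun i h1 h2 => dL i (by omega) (by omega)))
  have r8 : Relation.ReflTransGen D (f r) (f c) := (reach_dn (by omega) (fun i h1 h2 => dR i (by omega) (by omega)))
  have rev : ∀ x y, D x y → Relation.ReflTransGen D y x := by
    rw [hDdef]
    rintro x y
      (⟨i, h1, h2, rfl, rfl⟩ |
      ⟨i, h1, h2, rfl, rfl⟩ |
      ⟨i, h1, h2, rfl, rfl⟩ |
      ⟨rfl, rfl⟩ |
      ⟨rfl, rfl⟩ |
      ⟨rfl, rfl⟩ |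
      ⟨rfl, rfl⟩) <;>
    rw [← hDdef]
    · exact rev_dn dL (r1.trans r2) i h1 h2
    · exact rev_up dU r3 i h1 h2
    · exact rev_dn dR r9 i h1 h2
    · exact r7
    · exact r6
    · exact r4
    · exact r8
  refine ⟨D, sub, anti, rev, fun pos hi hs => ?_⟩
  have e1 : RA D (f a) (f b) (f (a + 1)) := ra_dn (by omega) (fun i h1 h2 => dL i (by omega) (by omega)) (by
      clear * - inj h1 h2 h3 h4 h6
      grind)
  have e2 : RA D (f b) (f a) (f l) := ra_dn (by omega) (fun i h1 h2 => dL i (by omega) (by omega)) (by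
      clear * - inj h1 h2 h3 h4 h6
      grind)
  have e3 : RA D (f b) (f l) (f (a + 1)) := .single ⟨d1, (by
      clear * - inj h1 h2 h3 h4 h6
      grind)⟩
  have e4 : RA D (f (a + 1)) (f (b + 1 + 1)) (f c) := ra_up (by omega) (fun i h1 h2 => dU i (by omega) (by omega)) (by
      clear * - inj h1 h2 h3 h4 h6
      grind)
  have e5 : RA D (f (a + 1)) (f c) (f (b + 1)) := .single ⟨d3, (by
      clear * - inj h1 h2 h3 h4 h6
      grind)⟩
  have e6 : RA D (f r) (f (b + 1 + 1)) (f c) := ra_up (by omega) (fun i h1 h2 => dU i (by omega) (by omega)) (by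
      clear * - inj h1 h2 h3 h4 h6
      grind)
  have e7 : RA D (f (b + 1 + 1)) (f r) (f c) := ra_dn (by omega) (fun i h1 h2 => dR i (by omega) (by omega)) (by
      clear * - inj h1 h2 h3 h4 h6
      grind)
  have e8 : RA D (f c) (f b) (f (a + 1)) := ra_dn (by omega) (fun i h1 h2 => dL i (by omega) (by omega)) (by
      clear * - inj h1 h2 h3 h4 h6
      grind)
  have e9 : RA D (f c) (f (a + 1)) (f (b + 1)) := .single ⟨d2, (by
      clear * - inj h1 h2 h3 h4 h6
      grind)⟩
  have e10 : RA D (f c) (f (b + 1)) (f (a + 1)) := ra_dn (by omega) (fun i h1 h2 => dL i (by omega) (by omega)) (by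
      clear * - inj h1 h2 h3 h4 h6
      grind)
  have e11 : RA D (f (a + 1)) (f (b + 1)) (f c) := ra_up (by omega) (fun i h1 h2 => dU i (by omega) (by omega)) (by
      clear * - inj h1 h2 h3 h4 h6
      grind)
  have g1 := pos_chain hi hs hne (dL a (by omega) (by omega)) d2 (dL b (by omega) (by omega))
    (dU (b + 1) (by omega) (by omega)) (by
      clear * - inj h1 h2 h3 h4 h6
      grind) (by
      clear * - inj h1 h2 h3 h4 h6
      grind) (by
      clear * - inj h1 h2 h3 h4 h6
      grind) (by
      clear * - inj h1 h2 h3 h4 h6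
      grind) (by
      clear * - inj h1 h2 h3 h4 h6
      grind) e1 (e2.trans e3) (e4.trans e5)
  have g2 := pos_chain hi hs hne d4 d3 (dU (b + 1) (by omega) (by omega))
    (dL b (by omega) (by omega)) (by
      clear * - inj h1 h2 h3 h4 h6
      grind) (by
      clear * - inj h1 h2 h3 h4 h6
      grind) (by
      clear * - inj h1 h2 h3 h4 h6
      grind) (by
      clear * - inj h1 h2 h3 h4 h6
      grind) (by
      clear * - inj h1 h2 h3 h4 h6
      grind) e6 e7 (e8.trans e9)
  have g3 := pos_barrier hi hs e10 g2
  have g4 := pos_barrier hi hs e11 g1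
  omega

/-- Two consecutive cycles along a path, plus a chord. -/
theorem HP.cert_two {V : Type*} {G : SimpleGraph V} {f : ℕ → V} {n : ℕ} (h : HP G f n)
    {l v r x y : ℕ} (h1 : l + 2 ≤ v) (h2 : v + 2 ≤ r) (h3 : r < n)
    (c1 : G.Adj (f l) (f v)) (c2 : G.Adj (f v) (f r)) (hx : l ≤ x) (hxy : x + 2 ≤ y)
    (hy : y ≤ r) (he : G.Adj (f x) (f y)) (n1 : ¬ (x = l ∧ y = v)) (n2 : ¬ (x = v ∧ y = r)) :
    ∃ D, Cert G D := by
  obtain ⟨inj, adj⟩ := h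
  obtain ⟨s, rfl⟩ : ∃ s, v = l + s := ⟨v - l, by omega⟩
  obtain ⟨t, rfl⟩ : ∃ t, r = l + s + t := ⟨r - (l + s), by omega⟩
  obtain ⟨X, hX⟩ : ∃ X : ℕ → V, ∀ i, X i = f (if i ≤ s then l + s - i else l + s) := ⟨_, fun _ => rfl⟩
  obtain ⟨Y, hY⟩ : ∃ Y : ℕ → V, ∀ i, Y i = f (if i ≤ t then l + s + i else l + s) := ⟨_, fun _ => rfl⟩
  have fe : ∀ i j, i < n → j < n → (f i = f j ↔ i = j) := fun i j hi hj =>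
    ⟨inj i j hi hj, fun h => h ▸ rfl⟩
  have T : TwoCyc G X Y (s + 1) (t + 1) := by
    refine ⟨by omega, by omega, ?_, ?_, ?_, ?_, ?_, ?_, ?_, ?_⟩
    · simp [hX]
    · simp [hY]
    · simp [hX, hY]
    · intro i hi
      rw [hX, hX, if_pos (by omega)]
      split_ifs with h5
      · have := adj (l + s - (i + 1)) (by omega)
        rw [show l + s - (i + 1) + 1 = l + s - i by omega] at this
        exact this.symm
      · rw [show l + s - i = l by omega]
        exact c1
    · intro i hi
      rw [hY, hY, if_pos (by omega)]
      split_ifs with h5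
      · exact adj (l + s + i) (by omega)
      · rw [show i = t by omega]
        exact c2.symm
    · intro i j hi hj hij
      rw [hX, hX] at hij
      have := inj _ _ (by split_ifs <;> omega) (by split_ifs <;> omega) hij
      split_ifs at this <;> omega
    · intro i j hi hj hij
      rw [hY, hY] at hij
      have := inj _ _ (by split_ifs <;> omega) (by split_ifs <;> omega) hij
      split_ifs at this <;> omega
    · intro i j hi hj hij
      rw [hX, hY] at hij
      have := inj _ _ (by split_ifs <;> omega) (by split_ifs <;> omega) hij
      split_ifs at this <;> omega
  have cov : ∀ z, l ≤ z → z ≤ l + s + t →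
      (∃ i < s + 1, f z = X i) ∨ ∃ i < t + 1, f z = Y i := by
    intro z hz1 hz2
    rcases Nat.le_total z (l + s) with hz | hz
    · refine Or.inl ⟨l + s - z, by omega, ?_⟩
      rw [hX, if_pos (by omega)]
      congr 1
      omega
    · refine Or.inr ⟨z - (l + s), by omega, ?_⟩
      rw [hY, if_pos (by omega)]
      congr 1
      omega
  refine T.cert (cov x hx (by omega)) (cov y (by omega) hy) he ?_ ?_
  · intro i hi
    rw [hX, hX, fe _ _ (by omega) (by split_ifs <;> omega),
      fe _ _ (by omega) (by split_ifs <;> omega), fe _ _ (by omega) (by split_ifs <;> omega),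
      fe _ _ (by omega) (by split_ifs <;> omega)]
    split_ifs <;> omega
  · intro i hi
    rw [hY, hY, fe _ _ (by omega) (by split_ifs <;> omega),
      fe _ _ (by omega) (by split_ifs <;> omega), fe _ _ (by omega) (by split_ifs <;> omega),
      fe _ _ (by omega) (by split_ifs <;> omega)]
    split_ifs <;> omega

/-- A Hamiltonian cycle with a chord, seen as a theta. -/
theorem HP.cert_ham {V : Type*} [Finite V] {G : SimpleGraph V} {f : ℕ → V} {n : ℕ} (h : HP G f n)
    (hcov : ∀ x, ∃ i < n, f i = x) (hcard : n + 3 ≤ G.edgeSet.ncard)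
    (c1 : G.Adj (f 0) (f (n - 1))) {i j : ℕ} (hij : i + 2 ≤ j) (hj : j < n)
    (he : G.Adj (f i) (f j)) (hne : ¬ (i = 0 ∧ j = n - 1)) : ∃ D, Cert G D := by
  obtain ⟨inj, adj⟩ := h
  obtain ⟨s, rfl⟩ : ∃ s, j = i + s := ⟨j - i, by omega⟩
  obtain ⟨X, hX⟩ : ∃ X : ℕ → V, ∀ k, X k = f (i + k) := ⟨_, fun _ => rfl⟩
  obtain ⟨Y, hY⟩ : ∃ Y : ℕ → V, ∀ k, Y k = f (if k ≤ i then i - k else n + i - k) :=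
    ⟨_, fun _ => rfl⟩
  obtain ⟨Z, hZ⟩ : ∃ Z : ℕ → V, ∀ k, Z k = f (if k = 0 then i else i + s) := ⟨_, fun _ => rfl⟩
  have T : Theta G X Y Z s (n - s) 1 := by
    refine ⟨by omega, by omega, by omega, by omega, by omega, by omega, ?_, ?_, ?_, ?_,
      ?_, ?_, ?_, ?_, ?_, ?_, ?_, ?_, ?_⟩
    · simp [hX, hY]
    · simp [hX, hZ]
    · rw [hX, hY, if_neg (by omega)]
      congr 1
      omega
    · simp [hX, hZ]
    · intro k hk
      rw [hX, hX]
      exact adj (i + k) (by omega)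
    · intro k hk
      rw [hY, hY]
      split_ifs with h1 h2 h2
      · have := adj (i - (k + 1)) (by omega)
        rw [show i - (k + 1) + 1 = i - k by omega] at this
        exact this.symm
      · rw [show i - k = 0 by omega, show n + i - (k + 1) = n - 1 by omega]
        exact c1
      · omega
      · have := adj (n + i - (k + 1)) (by omega)
        rw [show n + i - (k + 1) + 1 = n + i - k by omega] at this
        exact this.symm
    · intro k hk
      obtain rfl : k = 0 := by omega
      simpa [hZ] using he
    all_goals
      intro k m hk hm hkm
      simp only [hX, hY, hZ] at hkm
      have := inj _ _ (by first | omega | (split_ifs <;> omega))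
        (by first | omega | (split_ifs <;> omega)) hkm
      first | omega | (split_ifs at this <;> omega)
  refine T.cert ?_ (by omega)
  intro v
  obtain ⟨z, hz, rfl⟩ := hcov v
  by_cases h1 : z ≤ i
  · refine Or.inr (Or.inl ⟨i - z, by omega, ?_⟩)
    rw [hY, if_pos (by omega)]
    congr 1
    omega
  · by_cases h2 : z ≤ i + s
    · refine Or.inl ⟨z - i, by omega, ?_⟩
      rw [hX]
      congr 1
      omega
    · refine Or.inr (Or.inl ⟨n + i - z, by omega, ?_⟩)
      rw [hY, if_neg (by omega)]
      congr 1
      omega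

/-- Two overlapping intervals covering everything, seen as a theta. -/
theorem HP.cert_lap {V : Type*} [Finite V] {G : SimpleGraph V} {f : ℕ → V} {n : ℕ} (h : HP G f n)
    (hcov : ∀ x, ∃ i < n, f i = x) (hcard : n + 3 ≤ G.edgeSet.ncard)
    {i j : ℕ} (hi : 0 < i) (hij : i < j) (hj : j + 1 < n)
    (c1 : G.Adj (f 0) (f j)) (c2 : G.Adj (f i) (f (n - 1))) : ∃ D, Cert G D := by
  obtain ⟨inj, adj⟩ := h
  obtain ⟨X, hX⟩ : ∃ X : ℕ → V, ∀ k, X k = f (i + k) := ⟨_, fun _ => rfl⟩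
  obtain ⟨Y, hY⟩ : ∃ Y : ℕ → V, ∀ k, Y k = f (if k ≤ i then i - k else j) :=
    ⟨_, fun _ => rfl⟩
  obtain ⟨Z, hZ⟩ : ∃ Z : ℕ → V, ∀ k, Z k = f (if k = 0 then i else n - k) := ⟨_, fun _ => rfl⟩
  have T : Theta G X Y Z (j - i) (i + 1) (n - j) := by
    refine ⟨by omega, by omega, by omega, by omega, by omega, by omega, ?_, ?_, ?_, ?_,
      ?_, ?_, ?_, ?_, ?_, ?_, ?_, ?_, ?_⟩
    · simp [hX, hY]
    · simp [hX, hZ]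
    · rw [hX, hY, if_neg (by omega)]
      congr 1
      omega
    · rw [hX, hZ, if_neg (by omega)]
      congr 1
      omega
    · intro k hk
      rw [hX, hX]
      exact adj (i + k) (by omega)
    · intro k hk
      rw [hY, hY, if_pos (by omega)]
      split_ifs with h1
      · have := adj (i - (k + 1)) (by omega)
        rw [show i - (k + 1) + 1 = i - k by omega] at this
        exact this.symm
      · rw [show i - k = 0 by omega]
        exact c1
    · intro k hk
      rw [hZ, hZ, if_neg (by omega : ¬ k + 1 = 0)]
      split_ifs with h1
      · subst h1
        exact c2
      · have := adj (n - (k + 1)) (by omega)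
        rw [show n - (k + 1) + 1 = n - k by omega] at this
        exact this.symm
    all_goals
      intro k m hk hm hkm
      simp only [hX, hY, hZ] at hkm
      have := inj _ _ (by first | omega | (split_ifs <;> omega))
        (by first | omega | (split_ifs <;> omega)) hkm
      first | omega | (split_ifs at this <;> omega)
  refine T.cert ?_ (by omega)
  intro v
  obtain ⟨z, hz, rfl⟩ := hcov v
  by_cases h1 : z ≤ i
  · refine Or.inr (Or.inl ⟨i - z, by omega, ?_⟩)
    rw [hY, if_pos (by omega)]
    congr 1
    omega
  · by_cases h2 : z ≤ j
    · refine Or.inl ⟨z - i, by omega, ?_⟩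
      rw [hX]
      congr 1
      omega
    · refine Or.inr (Or.inr ⟨n - z, by omega, ?_⟩)
      rw [hZ, if_neg (by omega)]
      congr 1
      omega

theorem HP.extra_chord {V : Type*} [Finite V] {G : SimpleGraph V} {f : ℕ → V} {n : ℕ}
    (hn : 5 ≤ n) (hcov : ∀ x, ∃ i < n, f i = x) (hcard : n + 3 ≤ G.edgeSet.ncard)
    (L : List (ℕ × ℕ)) (hL : L.length ≤ 3) :
    ∃ i j, i + 2 ≤ j ∧ j < n ∧ G.Adj (f i) (f j) ∧ (i, j) ∉ L := by
  classical
  obtain ⟨x, y, he, hn⟩ := exists_edge_notin G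
    (pathEdges f (n - 1) ∪ (L.map (fun p => s(f p.1, f p.2))).toFinset) (by
      have h1 := Finset.card_union_le (pathEdges f (n - 1))
        (L.map (fun p => s(f p.1, f p.2))).toFinset
      have h2 := pathEdges_card f (n - 1)
      have h3 := List.toFinset_card_le (L.map (fun p => s(f p.1, f p.2)))
      rw [List.length_map] at h3
      omega)
  rw [Finset.mem_union, not_or] at hn
  obtain ⟨n1, n2⟩ := hn
  obtain ⟨i, hi, rfl⟩ := hcov x
  obtain ⟨j, hj, rfl⟩ := hcov y
  have n3 := offPath_of_notin n1
  simp only [List.mem_toFinset, List.mem_map, not_exists, not_and] at n2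
  rcases Nat.lt_trichotomy i j with h | h | h
  · refine ⟨i, j, ?_, hj, he, fun hm => n2 _ hm rfl⟩
    by_contra hlt
    obtain rfl : j = i + 1 := by omega
    exact (n3 i (by omega)).1 ⟨rfl, rfl⟩
  · subst h
    exact absurd rfl he.ne
  · refine ⟨j, i, ?_, hi, he.symm, fun hm => n2 _ hm Sym2.eq_swap⟩
    by_contra hlt
    obtain rfl : i = j + 1 := by omega
    exact (n3 j (by omega)).2 ⟨rfl, rfl⟩

theorem greedy_chord {V : Type*} {G : SimpleGraph V} {f : ℕ → V} {n : ℕ}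
    (hb : ∀ k, k + 1 < n → ∃ i j, i ≤ k ∧ k < j ∧ j < n ∧ i + 2 ≤ j ∧ G.Adj (f i) (f j))
    (k : ℕ) (hk : k + 1 < n) :
    ∃ i j, i ≤ k ∧ k < j ∧ j < n ∧ i + 2 ≤ j ∧ G.Adj (f i) (f j) ∧
      ∀ i' j', i' ≤ k → j' < n → i' + 2 ≤ j' → G.Adj (f i') (f j') → j' ≤ j := by
  classical
  obtain ⟨i, j, h1, h2, h3, h4, h5⟩ := hb k hk
  let P : ℕ → Prop := fun j => ∃ i, i ≤ k ∧ j < n ∧ i + 2 ≤ j ∧ G.Adj (f i) (f j)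
  have hP : P j := ⟨i, h1, h3, h4, h5⟩
  obtain ⟨i', g1, g2, g3, g4⟩ : P (Nat.findGreatest P n) := Nat.findGreatest_spec h3.le hP
  have hle : j ≤ Nat.findGreatest P n := Nat.le_findGreatest h3.le hP
  refine ⟨i', _, g1, by omega, g2, g3, g4, ?_⟩
  intro i'' j'' a1 a2 a3 a4
  exact Nat.le_findGreatest a2.le ⟨i'', a1, a2, a3, a4⟩

theorem HP.exists_cert {V : Type*} [Finite V] {G : SimpleGraph V} {f : ℕ → V} {n : ℕ}
    (h : HP G f n) (hn : 5 ≤ n) (hcov : ∀ x, ∃ i < n, f i = x)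
    (hcard : n + 3 ≤ G.edgeSet.ncard)
    (hb : ∀ k, k + 1 < n → ∃ i j, i ≤ k ∧ k < j ∧ j < n ∧ i + 2 ≤ j ∧ G.Adj (f i) (f j)) :
    ∃ D, Cert G D := by
  obtain ⟨i1, j1, a1, a2, a3, a4, a5, a6⟩ := greedy_chord hb 0 (by omega)
  obtain rfl : i1 = 0 := by omega
  by_cases b1 : j1 = n - 1
  · subst b1
    obtain ⟨x, y, x1, x2, x3, x4⟩ := HP.extra_chord hn hcov hcard [(0, n - 1)] (by simp)
    exact h.cert_ham hcov hcard a5 x1 x2 x3 (by simpa using x4)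
  obtain ⟨i2, j2, c1, c2, c3, c4, c5, c6⟩ := greedy_chord hb j1 (by omega)
  have c7 : 0 < i2 := by
    by_contra h0
    have := a6 i2 j2 (by omega) c3 c4 c5
    omega
  by_cases b2 : j2 = n - 1
  · subst b2
    rcases Nat.lt_or_ge i2 j1 with h1 | h1
    · exact h.cert_lap hcov hcard c7 h1 (by omega) a5 c5
    · obtain rfl : i2 = j1 := by omega
      obtain ⟨x, y, x1, x2, x3, x4⟩ :=
        HP.extra_chord hn hcov hcard [(0, i2), (i2, n - 1)] (by simp)
      simp only [List.mem_cons, Prod.mk.injEq, List.not_mem_nil, or_false, not_or] at x4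
      exact h.cert_two a4 c4 c3 a5 c5 (Nat.zero_le x) x1 (by omega) x3 x4.1 x4.2
  obtain ⟨i3, j3, d1, d2, d3, d4, d5, d6⟩ := greedy_chord hb j2 (by omega)
  have d7 : j1 < i3 := by
    by_contra h0
    have := c6 i3 j3 (by omega) d3 d4 d5
    omega
  rcases Nat.lt_or_ge i2 j1 with h1 | h1
  · rcases Nat.lt_or_ge i3 j2 with h2 | h2
    · exact h.cert_A c7 h1 d7 h2 d2 d3 a5 c5 d5
    · obtain rfl : i3 = j2 := by omega
      exact h.cert_C c7 h1 c2 d4 d3 a5 c5 d5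
  obtain rfl : i2 = j1 := by omega
  rcases Nat.lt_or_ge i3 j2 with h2 | h2
  · exact h.cert_B a4 d7 h2 d2 d3 a5 c5 d5
  obtain rfl : i3 = j2 := by omega
  by_cases b3 : j3 = n - 1
  · obtain ⟨x, y, x1, x2, x3, x4⟩ :=
      HP.extra_chord hn hcov hcard [(0, i2), (i2, i3), (i3, j3)] (by simp)
    simp only [List.mem_cons, Prod.mk.injEq, List.not_mem_nil, or_false, not_or] at x4
    rcases Nat.lt_or_ge i3 y with h3 | h3
    · have hx : i2 < x := by
        by_contra h0
        have := c6 x y (by omega) x2 x1 x3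
        omega
      exact h.cert_two c4 d4 d3 c5 d5 hx.le x1 (by omega) x3 x4.2.1 x4.2.2
    · exact h.cert_two a4 c4 c3 a5 c5 (Nat.zero_le x) x1 h3 x3 x4.1 x4.2.1
  obtain ⟨i4, j4, e1, e2, e3, e4, e5, e6⟩ := greedy_chord hb j3 (by omega)
  have e7 : i3 < i4 := by
    by_contra h0
    have := d6 i4 j4 (by omega) e3 e4 e5
    omega
  rcases Nat.lt_or_ge i4 j3 with h3 | h3
  · exact h.cert_B c4 e7 h3 e2 e3 c5 d5 e5
  · obtain rfl : i4 = j3 := by omega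
    exact h.cert_D a4 c4 d4 e4 e3 a5 c5 d5 e5

theorem part_one (n : ℕ) (hn : 5 ≤ n) (V : Type) [Fintype V] (G : SimpleGraph V)
    (hV : Fintype.card V = n) (hG : Bridgeless G) (hcard : n + 3 ≤ G.edgeSet.ncard) :
    ∃ R : V → V → Prop, IsOrientation G R ∧ DiamLE R (n - 2) := by
  by_contra hbad
  obtain ⟨f, h1, h2, h3, h4⟩ := exists_path (by omega) hV G hG hbad
  obtain ⟨D, hD⟩ := HP.exists_cert (G := G) ⟨h1, h3⟩ hn h2 hcard h4
  exact hbad (Cert.good (by omega) hV G hG D hD)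

theorem relPow_flip {V : Type*} {R : V → V → Prop} (k : ℕ) (u v : V) (h : RelPow R k u v) :
    RelPow (fun x y => R y x) k v u := by
  induction k generalizing u with
  | zero => exact Eq.symm h
  | succ k ih =>
    obtain ⟨w, h1, h2⟩ := h
    exact relPow_snoc k v w u (ih w h2) h1

/-- Adjacency (upwards) in the extremal graph on `0, …, m + 2`. -/
def EE (m i j : ℕ) : Prop :=
  (i + 1 = j ∧ j ≤ m + 2) ∨ (i = 0 ∧ (j = m + 1 ∨ j = m + 2)) ∨ (i = m ∧ j = m + 2)

theorem ee_out {m : ℕ} {r : ℕ → ℕ → Prop}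
    (hd : ∀ i j, i ≤ m + 2 → j ≤ m + 2 → ∃ k ≤ m + 1, RelPow r k i j) (i : ℕ)
    (hi : i ≤ m + 2) : ∃ j, r i j := by
  obtain ⟨j, hj, hij⟩ : ∃ j, j ≤ m + 2 ∧ i ≠ j := by
    by_cases h : i = 0
    · exact ⟨1, by omega, by omega⟩
    · exact ⟨0, by omega, by omega⟩
  obtain ⟨k, hk, h⟩ := hd i j hi hj
  cases k with
  | zero => exact absurd h hij
  | succ k =>
    obtain ⟨w, hw, _⟩ := h
    exact ⟨w, hw⟩

theorem ee_in {m : ℕ} {r : ℕ → ℕ → Prop}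
    (hd : ∀ i j, i ≤ m + 2 → j ≤ m + 2 → ∃ k ≤ m + 1, RelPow r k i j) (i : ℕ)
    (hi : i ≤ m + 2) : ∃ j, r j i := by
  refine ee_out (m := m) (r := fun x y => r y x) ?_ i hi
  intro a b ha hb
  obtain ⟨k, hk, h⟩ := hd b a hb ha
  exact ⟨k, hk, relPow_flip k _ _ h⟩

theorem hA_aux {m p q x y : ℕ}
    (hpq : (p = m + 1 ∧ q = m + 2) ∨ (p = m + 2 ∧ q = m + 1)) (h1 : EE m x y ∨ EE m y x)
    (h2 : ¬ (x = y + 1 ∧ y < m)) (h3 : ¬ (x = q ∧ y = p)) :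
    (y = x + 1 ∧ x < m) ∨ (x = p ∧ y = q) ∨ (x = m ∧ y = p) ∨
      (x = p ∧ y = m) ∨ (x = m ∧ y = q) ∨ (x = q ∧ y = m) ∨ (x = 0 ∧ y = p) ∨
      (x = p ∧ y = 0) ∨ (x = 0 ∧ y = q) ∨ (x = q ∧ y = 0) := by
  have h4 : (y = x + 1 ∧ x < m) ∨ (x = m ∧ y = m + 1) ∨ (x = m + 1 ∧ y = m + 2) ∨
      (x = 0 ∧ y = m + 1) ∨ (x = 0 ∧ y = m + 2) ∨ (x = m ∧ y = m + 2) ∨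
      (x = m + 1 ∧ y = m) ∨ (x = m + 2 ∧ y = m + 1) ∨
      (y = 0 ∧ x = m + 1) ∨ (y = 0 ∧ x = m + 2) ∨ (y = m ∧ x = m + 2) := by
    unfold EE at h1
    rcases h1 with (⟨h, h'⟩ | ⟨h, h' | h'⟩ | ⟨h, h'⟩) | (⟨h, h'⟩ | ⟨h, h' | h'⟩ | ⟨h, h'⟩)
    · have : x < m ∨ x = m ∨ x = m + 1 := by omega
      rcases this with h5 | h5 | h5
      · left; omega
      · right; left; omega
      · right; right; left; omega
    · simp [h, h']
    · simp [h, h']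
    · simp [h, h']
    · have : y = m ∨ y = m + 1 := by omega
      rcases this with h5 | h5
      · right; right; right; right; right; right; left; omega
      · right; right; right; right; right; right; right; left; omega
    · simp [h, h']
    · simp [h, h']
    · simp [h, h']
  clear h1
  rcases hpq with ⟨hp, hq⟩ | ⟨hp, hq⟩ <;>
  rcases h4 with h | h | h | h | h | h | h | h | h | h | h <;>
  first
  | (left; omega)
  | (right; left; omega)
  | (right; right; left; omega)
  | (right; right; right; left; omega)
  | (right; right; right; right; left; omega)
  | (right; right; right; right; right; left; omega)
  | (right; right; right; right; right; right; left; omega)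
  | (right; right; right; right; right; right; right; left; omega)
  | (right; right; right; right; right; right; right; right; left; omega)
  | (right; right; right; right; right; right; right; right; right; omega)

set_option maxHeartbeats 4000000 in
theorem core_aux {m : ℕ} (hm : 2 ≤ m) {r : ℕ → ℕ → Prop}
    (hE : ∀ i j, r i j → EE m i j ∨ EE m j i)
    (tot : ∀ i j, EE m i j → r i j ∨ r j i) (anti : ∀ i j, r i j → ¬ r j i)
    (hd : ∀ i j, i ≤ m + 2 → j ≤ m + 2 → ∃ k ≤ m + 1, RelPow r k i j)
    (h01 : r 0 1) {p q : ℕ} (hpq : (p = m + 1 ∧ q = m + 2) ∨ (p = m + 2 ∧ q = m + 1))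
    (hr : r p q) : False := by
  have path : ∀ i, i < m → r i (i + 1) := by
    intro i
    induction i with
    | zero => intro _; exact h01
    | succ i ih =>
      intro hi
      have h1 := ih (by omega)
      obtain ⟨j, hj⟩ := ee_out hd (i + 1) (by omega)
      have h2 := anti _ _ h1
      have h3 : j = i ∨ j = i + 1 + 1 := by
        have := hE _ _ hj
        unfold EE at this
        omega
      rcases h3 with rfl | rfl
      · exact absurd hj h2
      · exact hj
  have hA : ∀ x y, r x y → (y = x + 1 ∧ x < m) ∨ (x = p ∧ y = q) ∨ (x = m ∧ y = p) ∨
      (x = p ∧ y = m) ∨ (x = m ∧ y = q) ∨ (x = q ∧ y = m) ∨ (x = 0 ∧ y = p) ∨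
      (x = p ∧ y = 0) ∨ (x = 0 ∧ y = q) ∨ (x = q ∧ y = 0) := by
    intro x y hxy
    have h1 := hE x y hxy
    by_cases h2 : x = y + 1 ∧ y < m
    · obtain ⟨rfl, h3⟩ := h2
      exact absurd (path y h3) (anti _ _ hxy)
    by_cases h3 : x = q ∧ y = p
    · obtain ⟨rfl, rfl⟩ := h3
      exact absurd hr (anti _ _ hxy)
    exact hA_aux hpq h1 h2 h3
  have key : ∀ (φ : ℕ → ℤ) (u v : ℕ), u ≤ m + 2 → v ≤ m + 2 → φ v = φ u + m + 2 →
      (∀ x y, r x y → φ y ≤ φ x + 1) → False := by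
    intro φ u v hu hv h1 h2
    obtain ⟨k, hk, h⟩ := hd u v hu hv
    have := relPow_potential φ h2 k u v h
    omega
  have hqo : r q m ∨ r q 0 := by
    obtain ⟨j, hj⟩ := ee_out hd q (by omega)
    have h1 : j = m ∨ j = 0 := by
      rcases hA _ _ hj with h | h | h | h | h | h | h | h | h | h <;> omega
    rcases h1 with h1 | h1
    · exact Or.inl (h1 ▸ hj)
    · exact Or.inr (h1 ▸ hj)
  have hpi : r m p ∨ r 0 p := by
    obtain ⟨j, hj⟩ := ee_in hd p (by omega)
    have h1 : j = m ∨ j = 0 := by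
      rcases hA _ _ hj with h | h | h | h | h | h | h | h | h | h <;> omega
    rcases h1 with h1 | h1
    · exact Or.inl (h1 ▸ hj)
    · exact Or.inr (h1 ▸ hj)
  have hmo : r m p ∨ r m q := by
    obtain ⟨j, hj⟩ := ee_out hd m (by omega)
    have h1 : j = p ∨ j = q := by
      rcases hA _ _ hj with h | h | h | h | h | h | h | h | h | h <;> omega
    rcases h1 with h1 | h1
    · exact Or.inl (h1 ▸ hj)
    · exact Or.inr (h1 ▸ hj)
  have h0i : r p 0 ∨ r q 0 := by
    obtain ⟨j, hj⟩ := ee_in hd 0 (by omega)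
    have h1 : j = p ∨ j = q := by
      rcases hA _ _ hj with h | h | h | h | h | h | h | h | h | h <;> omega
    rcases h1 with h1 | h1
    · exact Or.inl (h1 ▸ hj)
    · exact Or.inr (h1 ▸ hj)
  have tmp : r m p ∨ r p m := by
    rcases hpq with ⟨rfl, rfl⟩ | ⟨rfl, rfl⟩ <;> apply tot <;> unfold EE <;> omega
  have tmq : r m q ∨ r q m := by
    rcases hpq with ⟨rfl, rfl⟩ | ⟨rfl, rfl⟩ <;> apply tot <;> unfold EE <;> omega
  have t0p : r 0 p ∨ r p 0 := by
    rcases hpq with ⟨rfl, rfl⟩ | ⟨rfl, rfl⟩ <;> apply tot <;> unfold EE <;> omega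
  have t0q : r 0 q ∨ r q 0 := by
    rcases hpq with ⟨rfl, rfl⟩ | ⟨rfl, rfl⟩ <;> apply tot <;> unfold EE <;> omega
  have amp := anti m p
  have amq := anti m q
  have a0p := anti 0 p
  have a0q := anti 0 q
  by_cases b1 : r m p
  · have b1' := amp b1
    by_cases b2 : r m q
    · have b2' := amq b2
      have b3 : r q 0 := hqo.resolve_left b2'
      have b3' : ¬ r 0 q := fun h => a0q h b3
      by_cases b4 : r 0 p
      · have b4' := a0p b4
        refine key (fun x => if x = p then 0 else if x = q then 1 else x + 2) p m (by omega)
          (by omega) (by split_ifs <;> first | contradiction | omega) ?_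
        intro x y hxy
        rcases hA x y hxy with ⟨rfl, _⟩ | ⟨rfl, rfl⟩ | ⟨rfl, rfl⟩ | ⟨rfl, rfl⟩ | ⟨rfl, rfl⟩ |
          ⟨rfl, rfl⟩ | ⟨rfl, rfl⟩ | ⟨rfl, rfl⟩ | ⟨rfl, rfl⟩ | ⟨rfl, rfl⟩ <;>
        first
        | contradiction
        | (split_ifs <;> first | contradiction | omega)
      · have b4' := t0p.resolve_left b4
        refine key (fun x => if x = p then m + 2 else if x = q then 0 else x + 1) q p (by omega)
          (by omega) (by split_ifs <;> first | contradiction | omega) ?_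
        intro x y hxy
        rcases hA x y hxy with ⟨rfl, _⟩ | ⟨rfl, rfl⟩ | ⟨rfl, rfl⟩ | ⟨rfl, rfl⟩ | ⟨rfl, rfl⟩ |
          ⟨rfl, rfl⟩ | ⟨rfl, rfl⟩ | ⟨rfl, rfl⟩ | ⟨rfl, rfl⟩ | ⟨rfl, rfl⟩ <;>
        first
        | contradiction
        | (split_ifs <;> first | contradiction | omega)
    · have b2' := tmq.resolve_left b2
      by_cases b3 : r 0 q
      · have b3' := a0q b3
        have b4 : r p 0 := h0i.resolve_right b3'
        have b4' : ¬ r 0 p := fun h => a0p h b4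
        refine key (fun x => if x = q then 0 else if x = m then 1 else if x = p then 2 else x + 3)
          q (m - 1) (by omega) (by omega) (by split_ifs <;> first | contradiction | omega) ?_
        intro x y hxy
        rcases hA x y hxy with ⟨rfl, _⟩ | ⟨rfl, rfl⟩ | ⟨rfl, rfl⟩ | ⟨rfl, rfl⟩ | ⟨rfl, rfl⟩ |
          ⟨rfl, rfl⟩ | ⟨rfl, rfl⟩ | ⟨rfl, rfl⟩ | ⟨rfl, rfl⟩ | ⟨rfl, rfl⟩ <;>
        first
        | contradiction
        | (split_ifs <;> first | contradiction | omega)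
      · have b3' := t0q.resolve_left b3
        by_cases b4 : r 0 p
        · have b4' := a0p b4
          refine key (fun x => if x = 0 then m + 2 else if x = p then m else if x = q then m + 1
            else x - 1) 1 0 (by omega) (by omega) (by split_ifs <;> first | contradiction | omega) ?_
          intro x y hxy
          rcases hA x y hxy with ⟨rfl, _⟩ | ⟨rfl, rfl⟩ | ⟨rfl, rfl⟩ | ⟨rfl, rfl⟩ | ⟨rfl, rfl⟩ |
            ⟨rfl, rfl⟩ | ⟨rfl, rfl⟩ | ⟨rfl, rfl⟩ | ⟨rfl, rfl⟩ | ⟨rfl, rfl⟩ <;>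
          first
          | contradiction
          | (split_ifs <;> first | contradiction | omega)
        · have b4' := t0p.resolve_left b4
          refine key (fun x => if x = p then m + 1 else if x = q then m + 2 else x)
            0 q (by omega) (by omega) (by split_ifs <;> first | contradiction | omega) ?_
          intro x y hxy
          rcases hA x y hxy with ⟨rfl, _⟩ | ⟨rfl, rfl⟩ | ⟨rfl, rfl⟩ | ⟨rfl, rfl⟩ | ⟨rfl, rfl⟩ |
            ⟨rfl, rfl⟩ | ⟨rfl, rfl⟩ | ⟨rfl, rfl⟩ | ⟨rfl, rfl⟩ | ⟨rfl, rfl⟩ <;>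
          first
          | contradiction
          | (split_ifs <;> first | contradiction | omega)
  · have b1' := tmp.resolve_left b1
    have b2 : r m q := hmo.resolve_left b1
    have b2' := amq b2
    have b3 : r q 0 := hqo.resolve_left b2'
    have b3' : ¬ r 0 q := fun h => a0q h b3
    have b4 : r 0 p := hpi.resolve_left b1
    have b4' := a0p b4
    refine key (fun x => if x = 0 then m + 1 else if x = p then m + 2 else if x = q then m
      else x - 1) 1 p (by omega) (by omega) (by split_ifs <;> first | contradiction | omega) ?_
    intro x y hxy
    rcases hA x y hxy with ⟨rfl, _⟩ | ⟨rfl, rfl⟩ | ⟨rfl, rfl⟩ | ⟨rfl, rfl⟩ | ⟨rfl, rfl⟩ |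
      ⟨rfl, rfl⟩ | ⟨rfl, rfl⟩ | ⟨rfl, rfl⟩ | ⟨rfl, rfl⟩ | ⟨rfl, rfl⟩ <;>
    first
    | contradiction
    | (split_ifs <;> first | contradiction | omega)

theorem core_dir {m : ℕ} (hm : 2 ≤ m) {r : ℕ → ℕ → Prop}
    (hE : ∀ i j, r i j → EE m i j ∨ EE m j i)
    (tot : ∀ i j, EE m i j → r i j ∨ r j i) (anti : ∀ i j, r i j → ¬ r j i)
    (hd : ∀ i j, i ≤ m + 2 → j ≤ m + 2 → ∃ k ≤ m + 1, RelPow r k i j)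
    (h01 : r 0 1) : False := by
  rcases tot (m + 1) (m + 2) (by unfold EE; omega) with h | h
  · exact core_aux hm hE tot anti hd h01 (Or.inl ⟨rfl, rfl⟩) h
  · exact core_aux hm hE tot anti hd h01 (Or.inr ⟨rfl, rfl⟩) h

theorem core_nat {m : ℕ} (hm : 2 ≤ m) {r : ℕ → ℕ → Prop}
    (hE : ∀ i j, r i j → EE m i j ∨ EE m j i)
    (tot : ∀ i j, EE m i j → r i j ∨ r j i) (anti : ∀ i j, r i j → ¬ r j i)
    (hd : ∀ i j, i ≤ m + 2 → j ≤ m + 2 → ∃ k ≤ m + 1, RelPow r k i j) : False := by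
  rcases tot 0 1 (by unfold EE; omega) with h | h
  · exact core_dir hm hE tot anti hd h
  · refine core_dir (r := fun x y => r y x) hm (fun i j h => (hE j i h).symm)
      (fun i j h => (tot i j h).symm) (fun i j h => anti j i h) ?_ h
    intro i j hi hj
    obtain ⟨k, hk, h⟩ := hd j i hj hi
    exact ⟨k, hk, relPow_flip k _ _ h⟩

theorem bridgeless_of_strong {V : Type*} [Nonempty V] (G : SimpleGraph V) (D : V → V → Prop)
    (sub : ∀ x y, D x y → G.Adj x y) (anti : ∀ x y, D x y → ¬ D y x)
    (hs : ∀ x y, Relation.ReflTransGen D x y) : Bridgeless G := by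
  have aux : ∀ u v, ¬ D v u → (G.deleteEdges {s(u, v)}).Reachable v u := by
    intro u v huv
    suffices H : ∀ x, Relation.ReflTransGen D x u → (G.deleteEdges {s(u, v)}).Reachable x u from
      H v (hs v u)
    intro x hx
    induction hx using Relation.ReflTransGen.head_induction_on with
    | refl => exact .refl _
    | @head x y hxy _ ih =>
      by_cases hx : x = u
      · rw [hx]
      · refine SimpleGraph.Reachable.trans (SimpleGraph.Adj.reachable ?_) ih
        rw [SimpleGraph.deleteEdges_adj]
        refine ⟨sub x y hxy, ?_⟩
        simp only [Set.mem_singleton_iff, Sym2.eq_iff, not_or, not_and]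
        refine ⟨fun h => absurd h hx, ?_⟩
        rintro rfl rfl
        exact huv hxy
  refine ⟨⟨fun x y => ?_⟩, ?_⟩
  · induction hs x y with
    | refl => exact .refl _
    | tail _ h ih => exact ih.trans (sub _ _ h).reachable
  · intro e
    induction e with
    | _ u v =>
      rw [SimpleGraph.isBridge_iff]
      intro hb
      by_cases h : D v u
      · have h1 := aux v u (anti _ _ h)
        rw [Sym2.eq_swap] at h1
        exact hb h1
      · exact hb (aux u v h).symm

/-- The extremal graph. -/
def extG (m : ℕ) : SimpleGraph (Fin (m + 3)) :=
  SimpleGraph.fromRel (fun i j => EE m i j)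

theorem extG_adj {m : ℕ} (hm : 2 ≤ m) (i j : Fin (m + 3)) :
    (extG m).Adj i j ↔ EE m i j ∨ EE m j i := by
  unfold extG
  rw [SimpleGraph.fromRel_adj]
  constructor
  · exact fun h => h.2
  · intro h
    refine ⟨?_, h⟩
    rintro rfl
    unfold EE at h
    omega

theorem extG_bridgeless {m : ℕ} (hm : 2 ≤ m) : Bridgeless (extG m) := by
  have up : ∀ k (hk : k < m + 3), Relation.ReflTransGen
      (fun i j : Fin (m + 3) => (i : ℕ) + 1 = j ∨ ((i : ℕ) = m + 2 ∧ (j : ℕ) = 0))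
      ⟨0, by omega⟩ ⟨k, hk⟩ := by
    intro k
    induction k with
    | zero => intro hk; exact .refl
    | succ k ih => intro hk; exact (ih (by omega)).tail (Or.inl rfl)
  have dn : ∀ d k (hk : k < m + 3), k + d = m + 2 → Relation.ReflTransGen
      (fun i j : Fin (m + 3) => (i : ℕ) + 1 = j ∨ ((i : ℕ) = m + 2 ∧ (j : ℕ) = 0))
      ⟨k, hk⟩ ⟨0, by omega⟩ := by
    intro d
    induction d with
    | zero => intro k hk h; exact .single (Or.inr ⟨by simpa using h, rfl⟩)
    | succ d ih =>
      intro k hk h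
      exact (ih (k + 1) (by omega) (by omega)).head (Or.inl rfl)
  refine bridgeless_of_strong (extG m)
    (fun i j => (i : ℕ) + 1 = j ∨ ((i : ℕ) = m + 2 ∧ (j : ℕ) = 0)) ?_ ?_ ?_
  · intro i j h
    rw [extG_adj hm]
    unfold EE
    omega
  · intro i j h
    omega
  · intro i j
    exact (dn (m + 2 - i) i i.2 (by omega)).trans (up j j.2)

theorem extG_card {m : ℕ} (hm : 2 ≤ m) : (extG m).edgeSet.ncard = m + 5 := by
  let A : ℕ → ℕ := fun k => if k < m + 2 then k else if k < m + 4 then 0 else m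
  let B : ℕ → ℕ := fun k => if k < m + 2 then k + 1 else if k = m + 2 then m + 1 else m + 2
  have hA : ∀ k, A k = if k < m + 2 then k else if k < m + 4 then 0 else m := fun _ => rfl
  have hB : ∀ k, B k = if k < m + 2 then k + 1 else if k = m + 2 then m + 1 else m + 2 :=
    fun _ => rfl
  clear_value A B
  have hAB : ∀ k, A k < B k ∧ B k < m + 3 := by
    intro k
    rw [hA, hB]
    split_ifs <;> first | contradiction | omega
  let g : ℕ → Sym2 (Fin (m + 3)) := fun k =>
    s(⟨A k, (hAB k).1.trans (hAB k).2⟩, ⟨B k, (hAB k).2⟩)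
  have hg : (extG m).edgeSet = g '' Set.Iio (m + 5) := by
    have aux : ∀ x y : Fin (m + 3), EE m x y → ∃ k, k < m + 5 ∧ A k = x ∧ B k = y := by
      intro x y h
      unfold EE at h
      simp only [hA, hB]
      rcases h with ⟨h1, h2⟩ | ⟨h1, h2 | h2⟩ | ⟨h1, h2⟩
      · exact ⟨x, by omega, by split_ifs <;> first | contradiction | omega, by split_ifs <;> omega⟩
      · exact ⟨m + 2, by omega, by split_ifs <;> first | contradiction | omega, by split_ifs <;> omega⟩
      · exact ⟨m + 3, by omega, by split_ifs <;> first | contradiction | omega, by split_ifs <;> omega⟩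
      · exact ⟨m + 4, by omega, by split_ifs <;> first | contradiction | omega, by split_ifs <;> omega⟩
    ext e
    induction e with
    | _ x y =>
      rw [SimpleGraph.mem_edgeSet, extG_adj hm]
      constructor
      · rintro (h | h)
        · obtain ⟨k, hk, h1, h2⟩ := aux x y h
          refine ⟨k, hk, ?_⟩
          simp [g, h1, h2]
        · obtain ⟨k, hk, h1, h2⟩ := aux y x h
          refine ⟨k, hk, ?_⟩
          simp [g, h1, h2, Sym2.eq_swap]
      · rintro ⟨k, hk, h⟩
        simp only [g, Sym2.eq_iff, Fin.ext_iff] at h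
        have hk' : k < m + 5 := hk
        rw [hA, hB] at h
        unfold EE
        split_ifs at h <;> omega
  have hinj : Set.InjOn g (Set.Iio (m + 5)) := by
    intro k hk l hl h
    have hk' : k < m + 5 := hk
    have hl' : l < m + 5 := hl
    simp only [g, Sym2.eq_iff, Fin.ext_iff] at h
    have h1 := hAB k
    have h2 := hAB l
    have h3 : A k = A l ∧ B k = B l := by omega
    rw [hA, hA, hB, hB] at h3
    split_ifs at h3 <;> omega
  rw [hg, hinj.ncard_image, ← Finset.coe_Iio, Set.ncard_coe_finset]
  simp

theorem extG_bad {m : ℕ} (hm : 2 ≤ m) :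
    ¬ ∃ R : Fin (m + 3) → Fin (m + 3) → Prop, IsOrientation (extG m) R ∧ DiamLE R (m + 1) := by
  rintro ⟨R, ⟨h1, h2⟩, hd⟩
  let r : ℕ → ℕ → Prop := fun i j => ∃ x y : Fin (m + 3), (x : ℕ) = i ∧ (y : ℕ) = j ∧ R x y
  refine core_nat (r := r) hm ?_ ?_ ?_ ?_
  · rintro _ _ ⟨x, y, rfl, rfl, h⟩
    exact (extG_adj hm x y).1 (h1 x y h)
  · intro i j h
    have hi : i < m + 3 := by unfold EE at h; omega
    have hj : j < m + 3 := by unfold EE at h; omega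
    have h3 := h2 ⟨i, hi⟩ ⟨j, hj⟩ ((extG_adj hm _ _).2 (Or.inl h))
    by_cases h4 : R ⟨j, hj⟩ ⟨i, hi⟩
    · exact Or.inr ⟨_, _, rfl, rfl, h4⟩
    · exact Or.inl ⟨_, _, rfl, rfl, h3.2 h4⟩
  · rintro _ _ ⟨x, y, rfl, rfl, h⟩ ⟨y', x', hy, hx, h'⟩
    obtain rfl := Fin.ext hy
    obtain rfl := Fin.ext hx
    exact (h2 _ _ (h1 _ _ h)).1 h h'
  · intro i j hi hj
    obtain ⟨k, hk, h⟩ := hd ⟨i, by omega⟩ ⟨j, by omega⟩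
    refine ⟨k, hk, ?_⟩
    have aux : ∀ k (u v : Fin (m + 3)), RelPow R k u v → RelPow r k u v := by
      intro k
      induction k with
      | zero => intro u v h; exact congrArg _ h
      | succ k ih =>
        rintro u v ⟨w, hw, h⟩
        exact ⟨w, ⟨u, w, rfl, rfl, hw⟩, ih w v h⟩
    exact aux k _ _ h

theorem stmt_14 (n : ℕ) (hn : 5 ≤ n) :
    (∀ (V : Type) [Fintype V] (G : SimpleGraph V), Fintype.card V = n →
      Bridgeless G → n + 3 ≤ G.edgeSet.ncard →
      ∃ R : V → V → Prop, IsOrientation G R ∧ DiamLE R (n - 2)) ∧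
    (∃ G : SimpleGraph (Fin n), Bridgeless G ∧ G.edgeSet.ncard = n + 2 ∧
      ¬ ∃ R : Fin n → Fin n → Prop, IsOrientation G R ∧ DiamLE R (n - 2)) := by
  refine ⟨fun V _ G hV hG hcard => part_one n hn V G hV hG hcard, ?_⟩
  obtain ⟨m, rfl⟩ : ∃ m, n = m + 3 := ⟨n - 3, by omega⟩
  exact ⟨extG m, extG_bridgeless (by omega), extG_card (by omega), extG_bad (by omega)⟩
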